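/- arXiv:1010.2603 — 2 statements merged into one kernel-verified Lean document; each statement's English description precedes it below -/
import Mathlib

section
/- If a, b, c are integers with a ≠ 0 such that (X, Y) = (b/a^2, 3c/(2a^5)) is a rational point on Y^2 = 3(X^5 - 1), then b = a^2 and c = 0. -/
/-!
Write `X = n / D` in lowest terms with `D > 0`. Clearing denominators gives an integer `z` with
`z ^ 2 = 3 * D * (n - D) * Φ`, where `Φ = n ^ 4 + n ^ 3 * D + n ^ 2 * D ^ 2 + n * D ^ 3 + D ^ 4`. The factor `Φ` is
positive, prime to `3 * D`, and its only possible common prime with `n - D` is `5`, to the first power.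
Hence `Φ` is a square or five times a square, and the two cases are treated by different descents.

If `5 ∣ n - D`, then `Φ` is five times a square. Since
`16 * Φ = 5 * (n + D) ^ 4 + 10 * (n + D) ^ 2 * (n - D) ^ 2 + (n - D) ^ 4`, this is a point on the genus one curve
`M ^ 4 + 50 * M ^ 2 * e ^ 2 + 125 * e ^ 4 = N ^ 2` with `e = (n - D) / 5` up to a factor `2`. A classical
2-descent (`elliptic_descent`) shows `e = 0`, that is, `X = 1`.

If `5 ∤ n - D`, then `Φ` and `3 * D * (n - D)` are squares. Modulo `3` the factor `3` must belong to `D`, so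
`D = 3 * e ^ 2`, `n - D = r ^ 2`, and with `Φ = s ^ 2` one gets `(r * s) ^ 2 + 243 * e ^ 10 = n ^ 5`. This has no
solution with `e ≠ 0` (`sq_add_eq_fifth`): unique factorization in the Eisenstein integers gives
`9 * e ^ 5 = V * (5 * U ^ 4 - 30 * U ^ 2 * V ^ 2 + 9 * V ^ 4)`, and the quartic factor is, up to an explicit
constant, a fifth power. It is also a norm from `ℚ(√5)`, whose ring of integers is a principal ideal
domain with units `±ω ^ k`. Either congruences modulo `5` and `11` exclude every `k`
(`not_five_dvd_case`), or `5` divides `V` and the equation falls under the descent by which Dirichlet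
treated Fermat's equation for exponent `5` (`five_dvd_case`, `dirichlet_descent`).

Both quadratic rings are `QuadraticAlgebra ℤ c 1`, that is `ℤ[ω]` with `ω ^ 2 = ω + c`, for `c = -1` and `c = 1`.
-/

/-! ### The quadratic rings `ℤ[ω]` -/

open QuadraticAlgebra in
lemma norm_formula (c : ℤ) (x : QuadraticAlgebra ℤ c 1) :
    norm x = x.re ^ 2 + x.re * x.im - c * x.im ^ 2 := by
  rw [norm_def]; ring

/-- The norm form of `ℤ[ω]`, with `ω ^ 2 = ω + c`, has discriminant `1 + 4 * c`, hence is anisotropic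
when this is not a square. -/
lemma eq_zero_of_norm {c : ℤ} (hc : ¬ IsSquare (1 + 4 * c)) (x : QuadraticAlgebra ℤ c 1)
    (h : QuadraticAlgebra.norm x = 0) : x = 0 := by
  rw [norm_formula] at h
  have h1 : (2 * x.re + x.im) ^ 2 = (1 + 4 * c) * x.im ^ 2 := by linear_combination 4 * h
  have him : x.im = 0 := by
    by_contra h0
    have hd : x.im ^ 2 ∣ (2 * x.re + x.im) ^ 2 := ⟨1 + 4 * c, by rw [h1]; ring⟩
    obtain ⟨k, hk⟩ := (Int.pow_dvd_pow_iff two_ne_zero).1 hd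
    apply hc
    refine ⟨k, ?_⟩
    rw [hk] at h1
    have h2 : x.im ^ 2 ≠ 0 := pow_ne_zero 2 h0
    apply mul_right_cancel₀ h2
    linear_combination -h1
  rw [him] at h1
  have hre : x.re = 0 := by
    have : (2 * x.re) ^ 2 = 0 := by simpa using h1
    simpa using this
  ext <;> simp [him, hre]

/-- Division with remainder for the norm: round both coordinates of `x / y`. The remainder of the
rounding has coordinates at most `1 / 2`, and `|α ^ 2 + α * β - c * β ^ 2| ≤ 3 / 4` there. -/
lemma exists_quotient {c : ℤ} (hc1 : c = 1 ∨ c = -1) (hc : ¬ IsSquare (1 + 4 * c))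
    (x y : QuadraticAlgebra ℤ c 1) (hy : y ≠ 0) :
    ∃ q : QuadraticAlgebra ℤ c 1, (QuadraticAlgebra.norm (x - y * q)).natAbs <
      (QuadraticAlgebra.norm y).natAbs := by
  set n : ℤ := QuadraticAlgebra.norm y with hn
  have hn0 : n ≠ 0 := fun h => hy (eq_zero_of_norm hc y h)
  set z := x * star y with hz
  set q : QuadraticAlgebra ℤ c 1 := ⟨round ((z.re : ℚ) / n), round ((z.im : ℚ) / n)⟩ with hq
  refine ⟨q, ?_⟩
  have key : n * QuadraticAlgebra.norm (x - y * q) =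
      (z.re - n * q.re) ^ 2 + (z.re - n * q.re) * (z.im - n * q.im) -
        c * (z.im - n * q.im) ^ 2 := by
    have e : (x - y * q) * star y = z - n * q := by
      have := QuadraticAlgebra.algebraMap_norm_eq_mul_star y
      rw [← hn] at this
      have h2 : (algebraMap ℤ (QuadraticAlgebra ℤ c 1) n) = (n : QuadraticAlgebra ℤ c 1) := by simp
      rw [hz, ← h2, this]; ring
    have e2 := congrArg QuadraticAlgebra.norm e
    rw [map_mul, QuadraticAlgebra.norm_star, norm_formula c (z - n * q), ← hn] at e2
    simp at e2
    linear_combination e2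
  have hnq : (n : ℚ) ≠ 0 := by exact_mod_cast hn0
  set α : ℚ := (z.re : ℚ) / n - round ((z.re : ℚ) / n) with hα
  set β : ℚ := (z.im : ℚ) / n - round ((z.im : ℚ) / n) with hβ
  have hα' : |α| ≤ 1 / 2 := abs_sub_round _
  have hβ' : |β| ≤ 1 / 2 := abs_sub_round _
  have key2 : ((QuadraticAlgebra.norm (x - y * q) : ℤ) : ℚ) = n * (α ^ 2 + α * β - c * β ^ 2) := by
    have : (n : ℚ) * ((QuadraticAlgebra.norm (x - y * q) : ℤ) : ℚ) =
      (z.re - n * q.re) ^ 2 + (z.re - n * q.re) * (z.im - n * q.im) -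
        c * (z.im - n * q.im) ^ 2 := by exact_mod_cast key
    apply mul_left_cancel₀ hnq
    rw [this, hα, hβ, hq]
    field_simp
  have hlt : |α ^ 2 + α * β - c * β ^ 2| < 1 := by
    rw [abs_le] at hα' hβ'
    rw [abs_lt]
    rcases hc1 with rfl | rfl <;> push_cast <;> constructor <;> nlinarith
  have : |((QuadraticAlgebra.norm (x - y * q) : ℤ) : ℚ)| < |(n : ℚ)| := by
    rw [key2, abs_mul]
    exact mul_lt_of_lt_one_right (abs_pos.2 hnq) hlt
  zify
  exact_mod_cast this

lemma isDomain_quad {c : ℤ} (hc : ¬ IsSquare (1 + 4 * c)) : IsDomain (QuadraticAlgebra ℤ c 1) := by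
  have : NoZeroDivisors (QuadraticAlgebra ℤ c 1) := by
    constructor
    intro a b h
    have := congrArg QuadraticAlgebra.norm h
    rw [map_mul, QuadraticAlgebra.norm_zero, mul_eq_zero] at this
    exact this.imp (eq_zero_of_norm hc a) (eq_zero_of_norm hc b)
  exact NoZeroDivisors.to_isDomain _

/-- `ℤ[ω]` with `ω ^ 2 = ω + c` is a principal ideal domain for `c = 1` (the ring of integers of `ℚ(√5)`)
and `c = -1` (the Eisenstein integers). -/
lemma isPID_quad {c : ℤ} (hc1 : c = 1 ∨ c = -1) (hc : ¬ IsSquare (1 + 4 * c)) :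
    IsPrincipalIdealRing (QuadraticAlgebra ℤ c 1) := by
  classical
  have hD := isDomain_quad hc
  choose! Q hQ using exists_quotient hc1 hc
  let E : EuclideanDomain (QuadraticAlgebra ℤ c 1) :=
    { quotient := fun x y => if y = 0 then 0 else Q x y
      remainder := fun x y => if y = 0 then x else x - y * Q x y
      quotient_zero := fun x => by simp
      quotient_mul_add_remainder_eq := fun x y => by
        by_cases h : y = 0 <;> simp [h]
      r := fun x y => (QuadraticAlgebra.norm x).natAbs < (QuadraticAlgebra.norm y).natAbs
      r_wellFounded := (measure fun x : QuadraticAlgebra ℤ c 1 =>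
        (QuadraticAlgebra.norm x).natAbs).wf
      remainder_lt := fun x y hy => by simpa [hy] using hQ x y hy
      mul_left_not_lt := fun x y hy => by
        rw [map_mul, Int.natAbs_mul, not_lt]
        exact Nat.le_mul_of_pos_right _ (Int.natAbs_pos.2 fun h => hy (eq_zero_of_norm hc y h)) }
  exact EuclideanDomain.to_principal_ideal_domain

/-- If the norm of `a` is a fifth power prime to the trace of `a`, then `a` and its conjugate are
coprime with product a fifth power, so `a` is a fifth power up to a unit. -/
lemma exists_unit_mul_pow {c : ℤ} (hc1 : c = 1 ∨ c = -1) (hc : ¬ IsSquare (1 + 4 * c))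
    {a : QuadraticAlgebra ℤ c 1} {s y : ℤ}
    (hs : a + star a = (s : QuadraticAlgebra ℤ c 1)) (hn : a.norm = y ^ 5) (hsy : IsCoprime s y) :
    ∃ (u : (QuadraticAlgebra ℤ c 1)ˣ) (b : QuadraticAlgebra ℤ c 1), a = u * b ^ 5 := by
  have := isDomain_quad hc
  have := isPID_quad hc1 hc
  have hp : a * star a = (y : QuadraticAlgebra ℤ c 1) ^ 5 := by
    rw [← QuadraticAlgebra.algebraMap_norm_eq_mul_star, hn]; simp
  have hcop : IsCoprime a (star a) := by
    obtain ⟨p, q, hpq⟩ := hsy.pow_right (n := 5)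
    have hpq' : (p : QuadraticAlgebra ℤ c 1) * s + q * y ^ 5 = 1 := by exact_mod_cast hpq
    rw [← hs, ← hp] at hpq'
    exact ⟨p + q * star a, p, by linear_combination hpq'⟩
  obtain ⟨d, u, hu⟩ := exists_associated_pow_of_mul_eq_pow' hcop hp
  exact ⟨u, d, by rw [← hu]; ring⟩

/-! ### Units and fifth powers -/

open QuadraticAlgebra in
lemma eisenstein_unit_pow (u : (QuadraticAlgebra ℤ (-1) 1)ˣ) : u ^ 6 = 1 := by
  have hu : IsUnit (QuadraticAlgebra.norm (u : QuadraticAlgebra ℤ (-1) 1)) :=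
    QuadraticAlgebra.isUnit_iff_norm_isUnit.1 u.isUnit
  obtain ⟨⟨p, q⟩, hx⟩ : ∃ x : QuadraticAlgebra ℤ (-1) 1, x = u := ⟨_, rfl⟩
  rw [← hx, norm_formula, Int.isUnit_iff] at hu
  simp only at hu
  have h1 : p ^ 2 + p * q + q ^ 2 = 1 := by
    rcases hu with h | h
    · linarith
    · nlinarith [sq_nonneg (p + q), sq_nonneg p, sq_nonneg q]
  have hp : -1 ≤ p ∧ p ≤ 1 := by constructor <;> nlinarith [sq_nonneg (p + 2 * q)]
  have hq : -1 ≤ q ∧ q ≤ 1 := by constructor <;> nlinarith [sq_nonneg (q + 2 * p)]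
  ext1
  rw [Units.val_pow_eq_pow_val, ← hx]
  obtain ⟨hp1, hp2⟩ := hp
  obtain ⟨hq1, hq2⟩ := hq
  clear hx hu
  interval_cases p <;> interval_cases q <;> first | omega | (ext <;> simp [pow_succ])

/-- Every Eisenstein unit is a sixth root of unity, hence a fifth power, so no unit is left over. -/
lemma eisenstein_fifth {a : QuadraticAlgebra ℤ (-1) 1} {s y : ℤ}
    (hs : a + star a = (s : QuadraticAlgebra ℤ (-1) 1)) (hn : a.norm = y ^ 5)
    (hsy : IsCoprime s y) : ∃ b : QuadraticAlgebra ℤ (-1) 1, a = b ^ 5 := by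
  obtain ⟨u, b, h⟩ := exists_unit_mul_pow (Or.inr rfl)
    (fun ⟨k, hk⟩ => by nlinarith [mul_self_nonneg k]) hs hn hsy
  refine ⟨((u ^ 5 : (QuadraticAlgebra ℤ (-1) 1)ˣ) : QuadraticAlgebra ℤ (-1) 1) * b, ?_⟩
  have : (u ^ 5) ^ 5 = u := by
    have := eisenstein_unit_pow u
    calc (u ^ 5) ^ 5 = (u ^ 6) ^ 4 * u := by rw [← pow_mul, ← pow_mul, ← pow_succ]
      _ = u := by rw [this]; simp
  rw [mul_pow, ← Units.val_pow_eq_pow_val, this, h]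

open QuadraticAlgebra in
/-- A unit of `ℤ[ω]`, `ω ^ 2 = ω + 1`, with nonnegative coordinates is a power of `ω`, by descent on
the sum of the coordinates: `a + b * ω = ω * ((b - a) + a * ω)`. -/
lemma golden_nonneg (n : ℕ) : ∀ a b : ℤ, 0 ≤ a → 0 ≤ b → a + b ≤ n →
    (a ^ 2 + a * b - b ^ 2 = 1 ∨ a ^ 2 + a * b - b ^ 2 = -1) →
    ∃ k : ℕ, (⟨a, b⟩ : QuadraticAlgebra ℤ 1 1) = ω ^ k := by
  induction n with
  | zero =>
    intro a b ha hb hab h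
    obtain rfl : a = 0 := by push_cast at hab; omega
    obtain rfl : b = 0 := by push_cast at hab; omega
    norm_num at h
  | succ n ih =>
    intro a b ha hb hab h
    rcases ha.eq_or_lt with rfl | ha
    · refine ⟨1, ?_⟩
      have hb1 : b = 1 := by
        have : b ^ 2 = 1 := by
          rcases h with h | h
          · nlinarith
          · linarith
        nlinarith
      subst hb1
      ext <;> simp
    rcases hb.eq_or_lt with rfl | hb
    · refine ⟨0, ?_⟩
      have ha1 : a = 1 := by
        have : a ^ 2 = 1 := by
          rcases h with h | h
          · linarith
          · nlinarith
        nlinarith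
      subst ha1
      ext <;> simp
    have hba : a ≤ b := by
      by_contra hlt
      push Not at hlt
      rcases h with h | h <;> nlinarith [mul_pos ha hb]
    obtain ⟨k, hk⟩ := ih (b - a) a (by linarith) ha.le (by push_cast at hab; linarith) (by
      rcases h with h | h
      · right; linarith
      · left; linarith)
    refine ⟨k + 1, ?_⟩
    rw [pow_succ, ← hk]
    ext <;> simp

open QuadraticAlgebra in
/-- Every unit of `ℤ[ω]`, `ω ^ 2 = ω + 1`, is a power of `ω` up to a fifth power. A negative power of
`ω` is absorbed through `ω⁻¹ ^ k = ω ^ (4 * k) * (ω⁻¹ ^ k) ^ 5`. -/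
lemma golden_unit (u : (QuadraticAlgebra ℤ 1 1)ˣ) :
    ∃ (k : ℕ) (v : QuadraticAlgebra ℤ 1 1), (u : QuadraticAlgebra ℤ 1 1) = ω ^ k * v ^ 5 := by
  have hu : IsUnit (norm (u : QuadraticAlgebra ℤ 1 1)) :=
    isUnit_iff_norm_isUnit.1 u.isUnit
  generalize (u : QuadraticAlgebra ℤ 1 1) = x at hu ⊢
  clear u
  wlog hre : 0 ≤ x.re generalizing x
  · obtain ⟨k, v, h⟩ := this (-x) (by simpa using hu) (by simp; omega)
    exact ⟨k, -v, by rw [Odd.neg_pow (by decide), mul_neg, ← h, neg_neg]⟩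
  obtain ⟨a, b⟩ := x
  simp only at hre
  have hn := hu
  rw [Int.isUnit_iff, norm_formula] at hn
  simp only [one_mul] at hn
  rcases le_or_gt 0 b with hb | hb
  · obtain ⟨k, hk⟩ := golden_nonneg (a + b).toNat a b hre hb (by simp) hn
    exact ⟨k, 1, by simp [hk]⟩
  · rcases hre.eq_or_lt with rfl | hre
    · refine ⟨1, -1, ?_⟩
      have hb1 : b = -1 := by
        have : b ^ 2 = 1 := by
          rcases hn with h | h
          · nlinarith
          · linarith
        nlinarith
      subst hb1
      ext <;> simp [Odd.neg_pow (show Odd 5 by decide)]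
    have hab : 0 ≤ a + b := by
      by_contra hlt
      push Not at hlt
      rcases hn with h | h <;> nlinarith
    obtain ⟨k, hk⟩ := golden_nonneg a.toNat (a + b) (-b) hab (by linarith) (by simp) (by
      rcases hn with h | h
      · left; linarith
      · right; linarith)
    have hst : (⟨a + b, -b⟩ : QuadraticAlgebra ℤ 1 1) = star ⟨a, b⟩ := by ext <;> simp
    have hmul := algebraMap_norm_eq_mul_star (⟨a, b⟩ : QuadraticAlgebra ℤ 1 1)
    rw [← hst, hk] at hmul
    have hinv : (ω : QuadraticAlgebra ℤ 1 1) * (ω - 1) = 1 := by ext <;> simp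
    have hpow : (ω : QuadraticAlgebra ℤ 1 1) ^ k * (ω - 1) ^ k = 1 := by
      rw [← mul_pow, hinv, one_pow]
    obtain ⟨e, he, he5⟩ : ∃ e : QuadraticAlgebra ℤ 1 1,
        algebraMap ℤ _ (norm (⟨a, b⟩ : QuadraticAlgebra ℤ 1 1)) = e ∧ e ^ 5 = e := by
      rcases Int.isUnit_iff.1 hu with h | h
      · exact ⟨1, by rw [h]; simp, by simp⟩
      · exact ⟨-1, by rw [h]; simp, by rw [Odd.neg_pow (by decide)]; simp⟩
    rw [he] at hmul
    refine ⟨4 * k, e * (ω - 1) ^ k, ?_⟩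
    set P := (ω : QuadraticAlgebra ℤ 1 1) ^ k
    set I := (ω - 1 : QuadraticAlgebra ℤ 1 1) ^ k
    have e1 : (⟨a, b⟩ : QuadraticAlgebra ℤ 1 1) = e * I := by
      rw [hmul, mul_assoc, hpow, mul_one]
    rw [mul_pow, he5, mul_comm 4 k, pow_mul, e1]
    have : P ^ 4 * I ^ 5 = I := by
      calc P ^ 4 * I ^ 5 = (P * I) ^ 4 * I := by ring
        _ = I := by rw [hpow]; ring
    linear_combination (-e) * this

open QuadraticAlgebra in
lemma golden_fifth {a : QuadraticAlgebra ℤ 1 1} {s y : ℤ}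
    (hs : a + star a = (s : QuadraticAlgebra ℤ 1 1)) (hn : a.norm = y ^ 5)
    (hsy : IsCoprime s y) : ∃ k < 5, ∃ b : QuadraticAlgebra ℤ 1 1, a = ω ^ k * b ^ 5 := by
  obtain ⟨u, b, h⟩ := exists_unit_mul_pow (Or.inl rfl)
    (fun ⟨k, hk⟩ => by
      have h1 : k < 3 := by nlinarith
      have h2 : -3 < k := by nlinarith
      interval_cases k <;> omega) hs hn hsy
  obtain ⟨k, v, hk⟩ := golden_unit u
  refine ⟨k % 5, Nat.mod_lt _ (by norm_num), ω ^ (k / 5) * v * b, ?_⟩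
  rw [h, hk]
  conv_lhs => rw [← Nat.mod_add_div k 5]
  rw [pow_add, pow_mul' ω 5 (k / 5)]
  ring

/-! ### Fifth powers as values of norm forms -/

/-- The coordinates of a fifth power. -/
lemma fifth_re_im {c : ℤ} (b : QuadraticAlgebra ℤ c 1) :
    (b ^ 5).re = b.re ^ 5 + 10 * c * b.re ^ 3 * b.im ^ 2 + 10 * c * b.re ^ 2 * b.im ^ 3 +
      5 * c * (c + 1) * b.re * b.im ^ 4 + c * (2 * c + 1) * b.im ^ 5 ∧
    (b ^ 5).im = 5 * b.re ^ 4 * b.im + 10 * b.re ^ 3 * b.im ^ 2 + 10 * (c + 1) * b.re ^ 2 * b.im ^ 3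
      + 5 * (2 * c + 1) * b.re * b.im ^ 4 + (c ^ 2 + 3 * c + 1) * b.im ^ 5 := by
  constructor <;> simp [pow_succ] <;> ring

/-- Write `√d = 2 * ω - 1` with `d = 1 + 4 * c`, so that `⟨F - G, 2 * G⟩` is `F + G * √d`. When `F + G` is
odd and this element is a fifth power, it is one of some `f + g * √d` with `f`, `g` integers: a fifth root
outside `ℤ[√d]` would not have a fifth power with even second coordinate and odd first coordinate. -/
lemma sqrt_fifth {c : ℤ} (hc1 : c = 1 ∨ c = -1) {F G : ℤ} {b : QuadraticAlgebra ℤ c 1}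
    (h : (⟨F - G, 2 * G⟩ : QuadraticAlgebra ℤ c 1) = b ^ 5) (hodd : Odd (F + G)) :
    ∃ f g : ℤ, F = f * (f ^ 4 + 10 * (1 + 4 * c) * f ^ 2 * g ^ 2 + 5 * (1 + 4 * c) ^ 2 * g ^ 4) ∧
      G = g * (5 * f ^ 4 + 10 * (1 + 4 * c) * f ^ 2 * g ^ 2 + (1 + 4 * c) ^ 2 * g ^ 4) := by
  obtain ⟨h1, h2⟩ := fifth_re_im b
  rw [← h] at h1 h2
  obtain ⟨p, q⟩ := b
  simp only at h1 h2
  clear h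
  have hq : Even q := by
    by_contra hq
    rw [Int.not_even_iff_odd] at hq
    have e2 : Even (2 * G) := even_two_mul G
    have o1 : Odd (F - G) := by
      have : F - G = F + G - 2 * G := by ring
      rw [this]; exact hodd.sub_even e2
    rw [h1] at o1
    rw [h2] at e2
    rcases hc1 with rfl | rfl <;> simp +decide [← Int.not_even_iff_odd, Int.even_add, Int.even_mul, Int.even_pow] at hq o1 e2 <;> tauto
  obtain ⟨g, rfl⟩ := hq.two_dvd
  refine ⟨p + g, g, ?_, ?_⟩ <;> rcases hc1 with rfl | rfl
  · linarith
  · linarith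
  · linarith
  · linarith

open QuadraticAlgebra in
/-- Solutions of `F ^ 2 + 3 * G ^ 2 = y ^ 5` come from `F + G * √-3 = (f + g * √-3) ^ 5`. -/
lemma eisenstein_norm {F G y : ℤ} (h : F ^ 2 + 3 * G ^ 2 = y ^ 5) (hc : IsCoprime (2 * F) y)
    (hodd : Odd (F + G)) :
    ∃ f g : ℤ, F = f * (f ^ 4 - 30 * f ^ 2 * g ^ 2 + 45 * g ^ 4) ∧
      G = g * (5 * f ^ 4 - 30 * f ^ 2 * g ^ 2 + 9 * g ^ 4) := by
  obtain ⟨b, hb⟩ := eisenstein_fifth (a := ⟨F - G, 2 * G⟩) (s := 2 * F) (y := y)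
    (by ext <;> simp; ring) (by rw [norm_formula]; simp only; rw [← h]; ring) hc
  obtain ⟨f, g, h1, h2⟩ := sqrt_fifth (Or.inr rfl) hb hodd
  exact ⟨f, g, by rw [h1]; ring, by rw [h2]; ring⟩

open QuadraticAlgebra in
/-- Solutions of `F ^ 2 - 5 * G ^ 2 = y ^ 5` with `5 ∣ G` come from `F + G * √5 = (f + g * √5) ^ 5`: modulo `5`,
where fifth powers have second coordinate `0`, the condition on `G` excludes a nontrivial power of the
fundamental unit. -/
lemma golden_norm {F G y : ℤ} (h : F ^ 2 - 5 * G ^ 2 = y ^ 5) (hc : IsCoprime (2 * F) y)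
    (hodd : Odd (F + G)) (hF : ¬ 5 ∣ F) (hG : 5 ∣ G) :
    ∃ f g : ℤ, F = f * (f ^ 4 + 50 * f ^ 2 * g ^ 2 + 125 * g ^ 4) ∧
      G = 5 * g * (f ^ 4 + 10 * f ^ 2 * g ^ 2 + 5 * g ^ 4) := by
  obtain ⟨k, hk, b, hb⟩ := golden_fifth (a := ⟨F - G, 2 * G⟩) (s := 2 * F) (y := y)
    (by ext <;> simp; ring) (by rw [norm_formula]; simp only; rw [← h]; ring) hc
  have hk0 : k = 0 := by
    obtain ⟨h1, h2⟩ := fifth_re_im b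
    have h3 : (b ^ 5).im = 5 * (b.re ^ 4 * b.im + 2 * b.re ^ 3 * b.im ^ 2 +
      4 * b.re ^ 2 * b.im ^ 3 + 3 * b.re * b.im ^ 4 + b.im ^ 5) := by rw [h2]; ring
    generalize b ^ 5 = B at *
    generalize (b.re ^ 4 * b.im + 2 * b.re ^ 3 * b.im ^ 2 +
      4 * b.re ^ 2 * b.im ^ 3 + 3 * b.re * b.im ^ 4 + b.im ^ 5) = t at h3
    have hre := congrArg QuadraticAlgebra.re hb
    have him := congrArg QuadraticAlgebra.im hb
    by_contra h0
    interval_cases k <;> simp [pow_succ] at hre him h0 <;> omega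
  rw [hk0, pow_zero, one_mul] at hb
  obtain ⟨f, g, h1, h2⟩ := sqrt_fifth (Or.inl rfl) hb hodd
  exact ⟨f, g, by rw [h1]; ring, by rw [h2]; ring⟩

/-! ### The Dirichlet descent -/

/-- The quartic factor of the second coordinate of `(f + g * √5) ^ 5` is prime to `30` and to `g`. -/
lemma quartic_coprime {f g : ℤ} (hfg : IsCoprime f g) (hodd : Odd (f + g)) (hf : ¬ 5 ∣ f) :
    IsCoprime (f ^ 4 + 10 * f ^ 2 * g ^ 2 + 5 * g ^ 4) 30 ∧
      IsCoprime (f ^ 4 + 10 * f ^ 2 * g ^ 2 + 5 * g ^ 4) g := by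
  have hg : IsCoprime (f ^ 4 + 10 * f ^ 2 * g ^ 2 + 5 * g ^ 4) g := by
    have : f ^ 4 + 10 * f ^ 2 * g ^ 2 + 5 * g ^ 4 = f ^ 4 + g * (10 * f ^ 2 * g + 5 * g ^ 3) := by
      ring
    rw [this]
    exact (hfg.pow_left (m := 4)).add_mul_left_left _
  refine ⟨?_, hg⟩
  have h2 : IsCoprime (f ^ 4 + 10 * f ^ 2 * g ^ 2 + 5 * g ^ 4) 2 := by
    refine ((Int.prime_two).coprime_iff_not_dvd.2 ?_).symm
    rw [← even_iff_two_dvd]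
    simp +decide [← Int.not_even_iff_odd, Int.even_add, Int.even_mul, Int.even_pow] at hodd ⊢
    tauto
  have h5 : IsCoprime (f ^ 4 + 10 * f ^ 2 * g ^ 2 + 5 * g ^ 4) 5 := by
    refine ((Int.prime_iff_natAbs_prime.2 (by norm_num)).coprime_iff_not_dvd.2 ?_).symm
    intro h
    apply hf
    have : (5 : ℤ) ∣ f ^ 4 := by
      have := dvd_sub h (Dvd.intro (2 * f ^ 2 * g ^ 2 + g ^ 4) rfl)
      ring_nf at this
      exact this
    exact Prime.dvd_of_dvd_pow (Int.prime_iff_natAbs_prime.2 (by norm_num)) this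
  have h3 : IsCoprime (f ^ 4 + 10 * f ^ 2 * g ^ 2 + 5 * g ^ 4) 3 := by
    refine ((Int.prime_three).coprime_iff_not_dvd.2 ?_).symm
    intro h
    have key : ∀ f g : ZMod 3, f ^ 4 + 10 * f ^ 2 * g ^ 2 + 5 * g ^ 4 = 0 → f = 0 ∧ g = 0 := by
      decide
    obtain ⟨h1, h2⟩ := key f g (by exact_mod_cast (ZMod.intCast_zmod_eq_zero_iff_dvd _ 3).2 h)
    have := hfg.isUnit_of_dvd' ((ZMod.intCast_zmod_eq_zero_iff_dvd _ 3).1 h1)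
      ((ZMod.intCast_zmod_eq_zero_iff_dvd _ 3).1 h2)
    exact Int.prime_three.not_isUnit this
  have := (h2.mul_right h3).mul_right h5
  norm_num at this
  exact this

/-- The Dirichlet descent for exponent `5`. If `f ^ 4 + 10 * f ^ 2 * g ^ 2 + 5 * g ^ 4`, which equals
`(f ^ 2 + 5 * g ^ 2) ^ 2 - 5 * (2 * g ^ 2) ^ 2`, is a fifth power, then `golden_norm` gives `f₁`, `g₁` with
`2 * g ^ 2 = 5 * g₁ * (f₁ ^ 4 + 10 * f₁ ^ 2 * g₁ ^ 2 + 5 * g₁ ^ 4)`, and the two factors on the right inherit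
the hypotheses. The constant `C`, composed of the primes `2`, `3`, `5`, records by how much `g` fails
to be a fifth power. -/
lemma dirichlet_descent (n : ℕ) : ∀ f g y C x : ℤ, ∀ N : ℕ, IsCoprime f g → Odd (f + g) → ¬ 5 ∣ f →
    5 ∣ g → g ≠ 0 → f ^ 4 + 10 * f ^ 2 * g ^ 2 + 5 * g ^ 4 = y ^ 5 → C ∣ 30 ^ N → C * g = x ^ 5 →
    g.natAbs ≤ n → False := by
  have p5 : Prime (5 : ℤ) := Int.prime_iff_natAbs_prime.2 (by norm_num)
  induction n with
  | zero =>
    intro f g y C x N _ _ _ _ hg0 _ _ _ hn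
    omega
  | succ n ih =>
    intro f g y C x N hfg hodd hf hg hg0 hy hC hx hn
    obtain ⟨h30, hqg⟩ := quartic_coprime hfg hodd hf
    rw [hy] at h30 hqg
    have hy30 : IsCoprime y 30 := IsCoprime.of_isCoprime_of_dvd_left h30 (dvd_pow_self y (by norm_num))
    have hyg : IsCoprime y g := IsCoprime.of_isCoprime_of_dvd_left hqg (dvd_pow_self y (by norm_num))
    have hnorm : (f ^ 2 + 5 * g ^ 2) ^ 2 - 5 * (2 * g ^ 2) ^ 2 = y ^ 5 := by rw [← hy]; ring
    have hcop : IsCoprime (2 * (f ^ 2 + 5 * g ^ 2)) y := by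
      -- y divides `F ^ 2 - 20 g ^ 4` and is prime to `20 g`
      have h20 : IsCoprime y (20 * g ^ 4) := by
        refine IsCoprime.mul_right ?_ hyg.pow_right
        exact IsCoprime.of_isCoprime_of_dvd_right (hy30.pow_right (n := 2)) (by norm_num)
      have hF : IsCoprime y ((f ^ 2 + 5 * g ^ 2) ^ 2) := by
        have : (f ^ 2 + 5 * g ^ 2) ^ 2 = 20 * g ^ 4 + y * y ^ 4 := by linear_combination hnorm
        rw [this]
        exact h20.add_mul_left_right _
      have hF' : IsCoprime y (f ^ 2 + 5 * g ^ 2) :=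
        IsCoprime.of_isCoprime_of_dvd_right hF (dvd_pow_self _ two_ne_zero)
      exact ((IsCoprime.of_isCoprime_of_dvd_right hy30 (by norm_num)).mul_right hF').symm
    have hFodd : Odd (f ^ 2 + 5 * g ^ 2 + 2 * g ^ 2) := by
      simp +decide [← Int.not_even_iff_odd, Int.even_add, Int.even_mul, Int.even_pow] at hodd ⊢
      tauto
    have hF5 : ¬ 5 ∣ f ^ 2 + 5 * g ^ 2 := fun h =>
      hf (p5.dvd_of_dvd_pow ((Int.dvd_add_left (Dvd.intro _ rfl)).1 h))
    obtain ⟨f', g', hF, hG⟩ := golden_norm hnorm hcop hFodd hF5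
      (Dvd.dvd.mul_left (dvd_pow hg two_ne_zero) 2)
    have hg0' : g' ≠ 0 := by
      rintro rfl
      simp at hG
      exact hg0 hG
    have hf' : ¬ 5 ∣ f' := fun h => hF5 (hF ▸ Dvd.dvd.mul_right h _)
    have hodd' : Odd (f' + g') := by
      rw [hF, hG] at hFodd
      simp +decide [← Int.not_even_iff_odd, Int.even_add, Int.even_mul, Int.even_pow] at hFodd ⊢
      tauto
    have hfg' : IsCoprime f' g' := by
      have h1 : IsCoprime (f ^ 2 + 5 * g ^ 2) (2 * g ^ 2) := by
        have ho : IsCoprime (f ^ 2 + 5 * g ^ 2) 2 := by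
          refine (Int.prime_two.coprime_iff_not_dvd.2 fun h => ?_).symm
          rw [Int.odd_add] at hFodd
          have : Even (f ^ 2 + 5 * g ^ 2) := even_iff_two_dvd.2 h
          rw [← Int.not_even_iff_odd] at hFodd
          exact hFodd.2 (even_two_mul _) this
        refine ho.mul_right (IsCoprime.pow_right ?_)
        have : f ^ 2 + 5 * g ^ 2 = f ^ 2 + g * (5 * g) := by ring
        rw [this]
        exact (hfg.pow_left (m := 2)).add_mul_left_left _
      rw [hF, hG] at h1
      exact h1.of_mul_left_left.of_mul_right_left.of_mul_right_right
    obtain ⟨h30', hqg'⟩ := quartic_coprime hfg' hodd' hf'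
    set h' := f' ^ 4 + 10 * f' ^ 2 * g' ^ 2 + 5 * g' ^ 4 with hh'
    have hg5' : 5 ∣ g' := by
      obtain ⟨j, rfl⟩ := hg
      have h1 : 5 ∣ g' * h' := ⟨2 * j ^ 2, by linarith⟩
      rcases p5.dvd_or_dvd h1 with h | h
      · exact h
      · exact absurd (h30'.isUnit_of_dvd' h (by norm_num)) p5.not_isUnit
    have hC0 : 80 * C ^ 2 ∣ 30 ^ (4 + N * 2) := by
      rw [pow_add, pow_mul]
      exact mul_dvd_mul (by norm_num) (pow_dvd_pow_of_dvd hC 2)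
    have hprod : (80 * C ^ 2 * g') * h' = (2 * x ^ 2) ^ 5 := by
      have : (2 * x ^ 2) ^ 5 = 32 * (x ^ 5) ^ 2 := by ring
      rw [this, ← hx]
      linear_combination (-16 * C ^ 2) * hG
    have hcop' : IsCoprime (80 * C ^ 2 * g') h' := by
      refine (IsCoprime.mul_right ?_ hqg').symm
      exact IsCoprime.of_isCoprime_of_dvd_right h30'.pow_right hC0
    obtain ⟨⟨x', hx'⟩, ⟨y', hy'⟩⟩ := Int.eq_pow_of_mul_eq_pow_odd hcop' (by decide) hprod
    refine ih f' g' y' _ x' _ hfg' hodd' hf' hg5' hg0' hy' hC0 hx' ?_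
    -- the next coordinate is smaller because `25 * |g'| ^ 5 ≤ 2 * g ^ 2`
    have hle : |g'| < |g| := by
      by_contra hlt
      push Not at hlt
      have a1 : 1 ≤ |g| := Int.one_le_abs hg0
      have a2 : 5 * |g'| ^ 4 ≤ h' := by
        have : |g'| ^ 4 = g' ^ 4 := Even.pow_abs (by decide) g'
        rw [this, hh']
        nlinarith [sq_nonneg (f' ^ 2), sq_nonneg (f' * g')]
      have a3 : 2 * |g| ^ 2 = 5 * |g'| * h' := by
        have h0 : 0 ≤ h' := le_trans (by positivity) a2
        have := congrArg abs hG
        rw [abs_mul, abs_mul, abs_mul, abs_of_nonneg h0, abs_pow] at this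
        simpa using this
      have a4 : |g| ^ 2 ≤ |g'| ^ 2 := pow_le_pow_left₀ (abs_nonneg _) hlt 2
      have a5 : 1 ≤ |g'| := le_trans a1 hlt
      have a6 : |g'| ^ 2 ≤ |g'| ^ 5 := pow_le_pow_right₀ a5 (by norm_num)
      have a7 : 5 * |g'| * (5 * |g'| ^ 4) ≤ 5 * |g'| * h' :=
        mul_le_mul_of_nonneg_left a2 (by positivity)
      have a8 : 0 < |g'| ^ 5 := by positivity
      nlinarith
    rw [Int.abs_eq_natAbs, Int.abs_eq_natAbs] at hle
    omega

/-! ### A 2-descent on a curve of genus one -/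

/-- A factorisation of `125 * k ^ 4` into coprime integers is `± (m ^ 4) * (125 * n ^ 4)` up to
order; only the sum of the factors matters in the descent. -/
lemma sum_of_mul_eq {A B k : ℤ} (hc : IsCoprime A B) (h : A * B = 125 * k ^ 4) :
    ∃ m n : ℤ, IsCoprime m n ∧ k = m * n ∧
      (A + B = m ^ 4 + 125 * n ^ 4 ∨ A + B = -(m ^ 4 + 125 * n ^ 4)) := by
  have p5 : Prime (5 : ℤ) := Int.prime_iff_natAbs_prime.2 (by norm_num)
  wlog hA : ¬ 5 ∣ A generalizing A B
  · rw [not_not] at hA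
    have hB : ¬ 5 ∣ B := fun hB => p5.not_isUnit (hc.isUnit_of_dvd' hA hB)
    rw [add_comm A B]
    exact this hc.symm (by rw [mul_comm, h]) hB
  obtain ⟨B', rfl⟩ : (5 : ℤ) ^ 3 ∣ B :=
    p5.pow_dvd_of_dvd_mul_left 3 hA (h ▸ ⟨k ^ 4, by norm_num⟩)
  have h' : A * B' = k ^ 4 := by linarith
  have hc' : IsCoprime A B' := hc.of_mul_right_right
  obtain ⟨m, hm⟩ := exists_associated_pow_of_mul_eq_pow' hc' h'
  obtain ⟨n, hn⟩ := exists_associated_pow_of_mul_eq_pow' hc'.symm (by rw [mul_comm, h'])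
  have hmn : IsCoprime m n := by
    have : IsCoprime (m ^ 4) (n ^ 4) := (hc'.of_isCoprime_of_dvd_left hm.dvd).of_isCoprime_of_dvd_right hn.dvd
    exact (IsCoprime.pow_iff (by norm_num) (by norm_num)).1 this
  rw [Int.associated_iff] at hm hn
  have hk : k ^ 4 = (m * n) ^ 4 := by
    have h0 : 0 ≤ A * B' := by rw [h']; positivity
    have h1 : 0 ≤ m ^ 4 * n ^ 4 := by positivity
    rw [← h', mul_pow]
    rcases hm with hm | hm <;> rcases hn with hn | hn <;> rw [hm, hn] at h1 ⊢ <;> nlinarith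
  have hs : A + 5 ^ 3 * B' = m ^ 4 + 125 * n ^ 4 ∨ A + 5 ^ 3 * B' = -(m ^ 4 + 125 * n ^ 4) := by
    rw [← h', mul_pow] at hk
    -- if the signs disagree, one of the factors vanishes
    have h00 : A * B' = -(A * B') → A = 0 ∨ B' = 0 := fun h => mul_eq_zero.1 (by linarith)
    rcases hm with hm | hm <;> rcases hn with hn | hn <;> rw [hm, hn] at hk ⊢
    · left; ring
    · rcases h00 (by linarith) with h0 | h0
      · right; rw [h0]; ring
      · left; rw [h0]; ring
    · rcases h00 (by linarith) with h0 | h0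
      · left; rw [h0]; ring
      · right; rw [h0]; ring
    · right; ring
  rcases (pow_eq_pow_iff_of_ne_zero (by norm_num)).1 hk with hk | ⟨hk, -⟩
  · exact ⟨m, n, hmn, hk, hs⟩
  · exact ⟨m, -n, hmn.neg_right, by rw [hk]; ring, by simpa [Even.neg_pow (show Even 4 by decide)] using hs⟩

lemma natAbs_lt_of_mul {t n e : ℤ} (he : e = t * n) (he0 : e ≠ 0) (ht : 2 ≤ |t|) :
    n.natAbs < e.natAbs := by
  have h1 : |e| = |t| * |n| := by rw [he, abs_mul]
  have hn : 0 < |n| := abs_pos.2 (by rintro rfl; simp at he; exact he0 he)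
  have h2 : |n| < |e| := by nlinarith
  rwa [Int.abs_eq_natAbs, Int.abs_eq_natAbs, Nat.cast_lt] at h2

/-- The equation `M ^ 4 + 50 * M ^ 2 * e ^ 2 + 125 * e ^ 4 = N ^ 2` has only the coprime solutions with `e = 0`. This
is a 2-descent: writing `N ^ 2` as a difference of squares gives `e = g * h` with
`M ^ 2 = g ^ 4 - 25 * g ^ 2 * h ^ 2 + 125 * h ^ 4`, and repeating this for `M ^ 2` leads back to the first equation
with a proper divisor of `e`; the other signs are excluded by positivity, modulo `4` and modulo `16`. -/
lemma elliptic_descent (k : ℕ) : ∀ M e N : ℤ, IsCoprime M e →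
    M ^ 4 + 50 * M ^ 2 * e ^ 2 + 125 * e ^ 4 = N ^ 2 → e.natAbs ≤ k → e = 0 := by
  have p5 : Prime (5 : ℤ) := Int.prime_iff_natAbs_prime.2 (by norm_num)
  induction k with
  | zero => intro M e N _ _ hk; omega
  | succ k ih =>
    intro M e N hMe hN hk
    by_contra he0
    have h5M : ¬ 5 ∣ M := by
      rintro ⟨M₁, rfl⟩
      obtain ⟨N₁, rfl⟩ := p5.dvd_of_dvd_pow (n := 2) (a := N) (hN ▸
        ⟨125 * M₁ ^ 4 + 250 * M₁ ^ 2 * e ^ 2 + 25 * e ^ 4, by ring⟩)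
      obtain ⟨N₂, rfl⟩ := p5.dvd_of_dvd_pow (n := 2) (a := N₁)
        ⟨5 * M₁ ^ 4 + 10 * M₁ ^ 2 * e ^ 2 + e ^ 4, by linarith⟩
      have h5e : 5 ∣ e := p5.dvd_of_dvd_pow (n := 4)
        ⟨N₂ ^ 2 - M₁ ^ 4 - 2 * M₁ ^ 2 * e ^ 2, by linarith⟩
      exact p5.not_isUnit (hMe.isUnit_of_dvd' (dvd_mul_right 5 M₁) h5e)
    -- first descent: `(P - N) * (P + N) = 500 * e ^ 4` with `P = M ^ 2 + 25 * e ^ 2`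
    obtain ⟨g, h, hgh, rfl, hsum⟩ : ∃ g h : ℤ, IsCoprime g h ∧ e = g * h ∧
        (M ^ 2 + 25 * e ^ 2 = g ^ 4 + 125 * h ^ 4 ∨
          M ^ 2 + 25 * e ^ 2 = -(g ^ 4 + 125 * h ^ 4)) := by
      obtain ⟨A, hA⟩ : Even (M ^ 2 + 25 * e ^ 2 - N) := by
        have : Even ((M ^ 2 + 25 * e ^ 2) ^ 2 - N ^ 2) := ⟨250 * e ^ 4, by rw [← hN]; ring⟩
        rw [Int.even_sub, Int.even_pow' two_ne_zero, Int.even_pow' two_ne_zero] at this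
        rwa [Int.even_sub]
      have hAB : A * (M ^ 2 + 25 * e ^ 2 - A) = 125 * e ^ 4 := by
        have hN' : N = M ^ 2 + 25 * e ^ 2 - 2 * A := by linarith
        rw [hN'] at hN
        linarith
      have hc : IsCoprime A (M ^ 2 + 25 * e ^ 2 - A) := by
        refine isCoprime_of_prime_dvd (fun ⟨h1, h2⟩ => ?_) fun p hp h1 h2 => ?_
        · rw [h1] at hAB
          simp at hAB
          exact he0 hAB
        · have hP : p ∣ M ^ 2 + 25 * e ^ 2 := by simpa using dvd_add h1 h2
          have he : p ∣ 5 ^ 3 * e ^ 4 := by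
            have := dvd_mul_of_dvd_left h1 (M ^ 2 + 25 * e ^ 2 - A)
            rw [hAB] at this
            exact this
          rcases hp.dvd_or_dvd he with h | h
          · have := hp.dvd_of_dvd_pow h
            have h3 : p ∣ M := hp.dvd_of_dvd_pow ((dvd_add_left
              (Dvd.dvd.mul_right (this.trans (by norm_num)) _)).1 hP)
            exact h5M (((hp.associated_of_dvd p5 this).symm.dvd).trans h3)
          · have := hp.dvd_of_dvd_pow h
            have h3 : p ∣ M := hp.dvd_of_dvd_pow ((dvd_add_left
              (Dvd.dvd.mul_left (dvd_pow this two_ne_zero) _)).1 hP)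
            exact hp.not_isUnit (hMe.isUnit_of_dvd' h3 this)
      obtain ⟨g, h, h1, h2, h3⟩ := sum_of_mul_eq hc hAB
      exact ⟨g, h, h1, h2, by simpa using h3⟩
    have hg0 : g ≠ 0 := left_ne_zero_of_mul he0
    have hh0 : h ≠ 0 := right_ne_zero_of_mul he0
    have hM : M ^ 2 = g ^ 4 - 25 * g ^ 2 * h ^ 2 + 125 * h ^ 4 := by
      rcases hsum with hs | hs
      · linarith
      · exfalso
        have : 0 < g ^ 4 := by positivity
        nlinarith [sq_nonneg M, sq_nonneg (g * h), sq_nonneg (h ^ 2)]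
    have h5g : ¬ 5 ∣ g := by
      rintro ⟨g₁, rfl⟩
      exact h5M (p5.dvd_of_dvd_pow (n := 2)
        ⟨125 * g₁ ^ 4 - 125 * g₁ ^ 2 * h ^ 2 + 25 * h ^ 4, by linarith⟩)
    rcases Int.even_or_odd' h with ⟨j, hj | hj⟩
    · -- `h = 2 * j` is even and `g` is odd
      subst hj
      have hgodd : Odd g := by
        rw [← Int.not_even_iff_odd]
        intro hg
        exact Int.prime_two.not_isUnit (hgh.isUnit_of_dvd' hg.two_dvd (dvd_mul_right 2 j))
      have hj0 : j ≠ 0 := by rintro rfl; simp at hh0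
      have hgj : IsCoprime g j := hgh.of_mul_right_right
      obtain ⟨A, hA⟩ : Even (g ^ 2 - 50 * j ^ 2 - M) := by
        have hMo : Odd (M ^ 2) := by
          rw [hM, ← Int.not_even_iff_odd]
          simp +decide [Int.even_add, Int.even_sub, Int.even_pow]
          simpa using hgodd
        rw [Int.odd_pow' two_ne_zero] at hMo
        simp +decide [Int.even_sub, Int.even_mul, Int.even_pow]
        rw [← Int.not_even_iff_odd] at hMo hgodd
        tauto
      have hAB : A * (g ^ 2 - 50 * j ^ 2 - A) = 125 * j ^ 4 := by
        have hM' : M = g ^ 2 - 50 * j ^ 2 - 2 * A := by linarith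
        rw [hM'] at hM
        linarith
      have hc : IsCoprime A (g ^ 2 - 50 * j ^ 2 - A) := by
        refine isCoprime_of_prime_dvd (fun ⟨h1, h2⟩ => ?_) fun p hp h1 h2 => ?_
        · rw [h1] at hAB
          simp at hAB
          exact hj0 hAB
        · have hP : p ∣ g ^ 2 - 50 * j ^ 2 := by simpa using dvd_add h1 h2
          have he : p ∣ 5 ^ 3 * j ^ 4 := by
            have := dvd_mul_of_dvd_left h1 (g ^ 2 - 50 * j ^ 2 - A)
            rw [hAB] at this
            exact this
          rcases hp.dvd_or_dvd he with h | h
          · have := hp.dvd_of_dvd_pow h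
            have h3 : p ∣ g := hp.dvd_of_dvd_pow ((dvd_sub_left
              (Dvd.dvd.mul_right (this.trans (by norm_num)) _)).1 hP)
            exact h5g (((hp.associated_of_dvd p5 this).symm.dvd).trans h3)
          · have := hp.dvd_of_dvd_pow h
            have h3 : p ∣ g := hp.dvd_of_dvd_pow ((dvd_sub_left
              (Dvd.dvd.mul_left (dvd_pow this two_ne_zero) _)).1 hP)
            exact hp.not_isUnit (hgj.isUnit_of_dvd' h3 this)
      obtain ⟨m, n, hmn, hj, hs⟩ := sum_of_mul_eq hc hAB
      have hj2 : j ^ 2 = m ^ 2 * n ^ 2 := by rw [hj]; ring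
      rcases hs with hs | hs
      · have hlt : n.natAbs < (g * (2 * j)).natAbs := by
          refine natAbs_lt_of_mul (t := 2 * (g * m)) (by rw [hj]; ring) he0 ?_
          have hm0 : m ≠ 0 := by rintro rfl; simp at hj; exact hj0 hj
          have := Int.one_le_abs (mul_ne_zero hg0 hm0)
          rw [abs_mul, abs_two]
          linarith
        have := ih m n g hmn (by linarith) (by omega)
        rw [this] at hj
        simp at hj
        exact hj0 hj
      · obtain ⟨w, rfl⟩ := hgodd
        have key : ∀ w v : ZMod 4, (2 * w + 1) ^ 2 + v ^ 2 ≠ 0 := by decide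
        apply key w (m ^ 2 - 25 * n ^ 2 : ℤ)
        have h4 : (2 * w + 1) ^ 2 + (m ^ 2 - 25 * n ^ 2) ^ 2 = 4 * (125 * n ^ 4) := by linarith
        have h5 := congrArg (Int.cast : ℤ → ZMod 4) h4
        push_cast at h5 ⊢
        rw [h5]
        have : (4 : ZMod 4) = 0 := by decide
        rw [this, zero_mul]
    · -- `h` is odd; then `g` is even, since otherwise `M ^ 2 ≡ 5 [ZMOD 8]`
      have hg2 : Even g := by
        by_contra hgo
        rw [Int.not_even_iff_odd] at hgo
        obtain ⟨i, hi⟩ := hgo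
        have key : ∀ i j M : ZMod 8, M ^ 2 ≠ (2 * i + 1) ^ 4 -
          25 * (2 * i + 1) ^ 2 * (2 * j + 1) ^ 2 + 125 * (2 * j + 1) ^ 4 := by decide
        rw [hi, hj] at hM
        apply key i j M
        exact_mod_cast congrArg (Int.cast : ℤ → ZMod 8) hM
      have hho : Odd h := ⟨j, hj⟩
      have hAB : (2 * g ^ 2 - 25 * h ^ 2 - 2 * M) * (2 * g ^ 2 - 25 * h ^ 2 + 2 * M) =
          125 * h ^ 4 := by linear_combination (-4) * hM
      have hc : IsCoprime (2 * g ^ 2 - 25 * h ^ 2 - 2 * M) (2 * g ^ 2 - 25 * h ^ 2 + 2 * M) := by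
        have hodd : ∀ p : ℤ, Prime p → p ∣ 5 ^ 3 * h ^ 4 → ¬ p ∣ 2 := by
          intro p hp h1 h2
          have h3 : 2 ∣ 5 ^ 3 * h ^ 4 := (hp.associated_of_dvd Int.prime_two h2).symm.dvd.trans h1
          rw [← even_iff_two_dvd] at h3
          rw [← Int.not_even_iff_odd] at hho
          simp +decide [Int.even_mul, Int.even_pow] at h3
          simp [h3] at hho
        refine isCoprime_of_prime_dvd (fun ⟨h1, h2⟩ => ?_) fun p hp h1 h2 => ?_
        · rw [h1] at hAB
          simp at hAB
          exact hh0 hAB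
        · have hP : p ∣ 2 * (2 * g ^ 2 - 25 * h ^ 2) := by
            have := dvd_add h1 h2
            ring_nf at this ⊢
            exact this
          have he : p ∣ 5 ^ 3 * h ^ 4 := by
            have := dvd_mul_of_dvd_left h1 (2 * g ^ 2 - 25 * h ^ 2 + 2 * M)
            rw [hAB] at this
            exact this
          have hp2 := hodd p hp he
          replace hP := (hp.dvd_or_dvd hP).resolve_left hp2
          rcases hp.dvd_or_dvd he with h | h
          · have := hp.dvd_of_dvd_pow h
            have h3 : p ∣ g := hp.dvd_of_dvd_pow ((hp.dvd_or_dvd ((dvd_sub_left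
              (Dvd.dvd.mul_right (this.trans (by norm_num)) _)).1 hP)).resolve_left hp2)
            exact h5g (((hp.associated_of_dvd p5 this).symm.dvd).trans h3)
          · have := hp.dvd_of_dvd_pow h
            have h3 : p ∣ g := hp.dvd_of_dvd_pow ((hp.dvd_or_dvd ((dvd_sub_left
              (Dvd.dvd.mul_left (dvd_pow this two_ne_zero) _)).1 hP)).resolve_left hp2)
            exact hp.not_isUnit (hgh.isUnit_of_dvd' h3 this)
      obtain ⟨m, n, hmn, hmh, hs⟩ := sum_of_mul_eq hc hAB
      have hh2 : h ^ 2 = m ^ 2 * n ^ 2 := by rw [hmh]; ring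
      obtain ⟨i, rfl⟩ := hg2.two_dvd
      rcases hs with hs | hs
      · have hlt : n.natAbs < (2 * i * h).natAbs := by
          refine natAbs_lt_of_mul (t := 2 * (i * m)) (by rw [hmh]; ring) he0 ?_
          have hm0 : m ≠ 0 := by rintro rfl; simp at hmh; exact hh0 hmh
          have hi0 : i ≠ 0 := by rintro rfl; simp at hg0
          have := Int.one_le_abs (mul_ne_zero hi0 hm0)
          rw [abs_mul, abs_two]
          linarith
        have := ih m n (4 * i) hmn (by linarith) (by omega)
        rw [this] at hmh
        simp at hmh
        exact hh0 hmh
      · rw [hmh, Int.odd_mul] at hho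
        obtain ⟨⟨u, rfl⟩, ⟨v, rfl⟩⟩ := hho
        have key : ∀ u v : ZMod 16, 50 * (2 * u + 1) ^ 2 * (2 * v + 1) ^ 2 - (2 * u + 1) ^ 4 -
          125 * (2 * v + 1) ^ 4 ≠ 0 := by decide
        apply key u v
        have h4 : 50 * (2 * u + 1) ^ 2 * (2 * v + 1) ^ 2 - (2 * u + 1) ^ 4 -
          125 * (2 * v + 1) ^ 4 = 16 * i ^ 2 := by linarith
        have h5 := congrArg (Int.cast : ℤ → ZMod 16) h4
        push_cast at h5
        rw [h5]
        have : (16 : ZMod 16) = 0 := by decide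
        rw [this, zero_mul]

/-! ### The equation `c ^ 2 + 243 * e ^ 10 = b ^ 5` -/

lemma fifth_zmod_eleven : ∀ x : ZMod 11, x ^ 5 = 0 ∨ x ^ 5 = 1 ∨ x ^ 5 = -1 := by decide

open QuadraticAlgebra in
/-- The quintic `5 * U ^ 4 - 2430 * U ^ 2 * W ^ 2 + 59049 * W ^ 4 = y ^ 5` with `W` a fifth power prime to `5`. Here
`-y ^ 5` is the norm of `(729 * W ^ 2 - U ^ 2) + (2 * U ^ 2 - 486 * W ^ 2) * ω`, which is therefore `ω ^ k * b ^ 5`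
with `k < 5`. The values `k = 0, 2, 4` are impossible modulo `5`, and `k = 1, 3` modulo `11`, where fifth
powers are `0` or `±1`. -/
lemma not_five_dvd_case {U W x y : ℤ} (hUW : IsCoprime U W) (hodd : Odd (U + W)) (h3 : ¬ 3 ∣ U)
    (h5U : ¬ 5 ∣ U) (h5W : ¬ 5 ∣ W) (hW : W = x ^ 5)
    (hy : 5 * U ^ 4 - 2430 * U ^ 2 * W ^ 2 + 59049 * W ^ 4 = y ^ 5) : False := by
  have p5 : Prime (5 : ℤ) := Int.prime_iff_natAbs_prime.2 (by norm_num)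
  have hcop : IsCoprime (972 * W ^ 2) (-y) := by
    have hy2 : IsCoprime 2 (y ^ 5) := by
      rw [Int.prime_two.coprime_iff_not_dvd, ← hy, ← even_iff_two_dvd]
      simp +decide [← Int.not_even_iff_odd, Int.even_add, Int.even_sub, Int.even_mul,
        Int.even_pow] at hodd ⊢
      tauto
    have hy3 : IsCoprime 3 (y ^ 5) := by
      rw [Int.prime_three.coprime_iff_not_dvd, ← hy]
      intro h
      have h' : 3 ∣ 5 * U ^ 4 := (Int.dvd_add_right
        (a := 3) (b := -2430 * U ^ 2 * W ^ 2 + 59049 * W ^ 4)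
        ⟨-810 * U ^ 2 * W ^ 2 + 19683 * W ^ 4, by ring⟩).1 (by ring_nf at h ⊢; exact h)
      rcases Int.prime_three.dvd_or_dvd h' with h' | h'
      · norm_num at h'
      · exact h3 (Int.prime_three.dvd_of_dvd_pow h')
    have hyW : IsCoprime W (y ^ 5) := by
      have : y ^ 5 = 5 * U ^ 4 + W * (-2430 * U ^ 2 * W + 59049 * W ^ 3) := by rw [← hy]; ring
      rw [this]
      refine IsCoprime.add_mul_left_right (IsCoprime.mul_right ?_ hUW.symm.pow_right) _
      exact (p5.coprime_iff_not_dvd.2 h5W).symm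
    have : IsCoprime (2 ^ 2 * 3 ^ 5 * W ^ 2) (y ^ 5) :=
      ((hy2.pow_left).mul_left hy3.pow_left).mul_left hyW.pow_left
    norm_num at this
    exact (this.of_isCoprime_of_dvd_right (dvd_pow_self y (by norm_num))).neg_right
  obtain ⟨k, hk, b, hb⟩ := golden_fifth (a := ⟨729 * W ^ 2 - U ^ 2, 2 * U ^ 2 - 486 * W ^ 2⟩)
    (s := 972 * W ^ 2) (y := -y) (by
      ext
      · simp only [re_add, re_star, re_intCast, Int.cast_id]; ring
      · simp only [im_add, im_star, im_intCast]; ring)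
    (by rw [norm_formula, Odd.neg_pow (by decide), ← hy]; ring) hcop
  obtain ⟨hR, hS⟩ := fifth_re_im b
  -- modulo 5 only the units `ω` and `ω ^ 3` survive
  have hk13 : k = 1 ∨ k = 3 := by
    have h5 : (b ^ 5).im = 5 * (b.re ^ 4 * b.im + 2 * b.re ^ 3 * b.im ^ 2 +
      4 * b.re ^ 2 * b.im ^ 3 + 3 * b.re * b.im ^ 4 + b.im ^ 5) := by rw [hS]; ring
    have h5' : ((b ^ 5).im : ZMod 5) = 0 := by
      rw [h5, Int.cast_mul]
      exact mul_eq_zero_of_left (by decide) _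
    have hre := congrArg (fun z => (z.re : ZMod 5)) hb
    have him := congrArg (fun z => (z.im : ZMod 5)) hb
    generalize b ^ 5 = B at *
    have key0 : ∀ U W : ZMod 5, 2 * U ^ 2 - 486 * W ^ 2 = 0 → U = 0 := by decide
    have key2 : ∀ U W : ZMod 5, 729 * W ^ 2 - U ^ 2 = 2 * U ^ 2 - 486 * W ^ 2 → U = 0 := by decide
    have key4 : ∀ U W : ZMod 5, 3 * (729 * W ^ 2 - U ^ 2) = 2 * (2 * U ^ 2 - 486 * W ^ 2) →
      U = 0 := by decide
    have hU0 : (U : ZMod 5) ≠ 0 := fun h => h5U ((ZMod.intCast_zmod_eq_zero_iff_dvd U 5).1 h)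
    by_contra hcon
    interval_cases k
    · simp [h5'] at hre him
      exact hU0 (key0 U W him)
    · simp at hcon
    · simp [pow_succ, h5'] at hre him
      exact hU0 (key2 U W (by linear_combination hre - him))
    · simp at hcon
    · simp [pow_succ, h5'] at hre him
      exact hU0 (key4 U W (by linear_combination 3 * hre - 2 * him))
  -- the two ring homomorphisms to `ZMod 11` send `ω` to `4` and to `8`
  have h11 : (11 : ZMod 11) = 0 := by decide
  have e4 : ((b ^ 5).re : ZMod 11) + 4 * ((b ^ 5).im : ZMod 11) =
      ((b.re : ZMod 11) + 4 * b.im) ^ 5 := by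
    rw [hR, hS]
    push_cast
    linear_combination (-(10 * (b.re : ZMod 11) ^ 3 * b.im ^ 2 + 50 * (b.re : ZMod 11) ^ 2 *
      b.im ^ 3 + 110 * (b.re : ZMod 11) * b.im ^ 4 + 91 * (b.im : ZMod 11) ^ 5)) * h11
  have e8 : ((b ^ 5).re : ZMod 11) + 8 * ((b ^ 5).im : ZMod 11) =
      ((b.re : ZMod 11) + 8 * b.im) ^ 5 := by
    rw [hR, hS]
    push_cast
    linear_combination (-(50 * (b.re : ZMod 11) ^ 3 * b.im ^ 2 + 450 * (b.re : ZMod 11) ^ 2 *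
      b.im ^ 3 + 1850 * (b.re : ZMod 11) * b.im ^ 4 + 2975 * (b.im : ZMod 11) ^ 5)) * h11
  have hW' : (W : ZMod 11) = (x : ZMod 11) ^ 5 := by rw [hW]; push_cast; rfl
  have key : ∀ U W P Q : ZMod 11, (W = 0 ∨ W = 1 ∨ W = -1) → (P = 0 ∨ P = 1 ∨ P = -1) →
      (Q = 0 ∨ Q = 1 ∨ Q = -1) →
      ((4 * P = 729 * W ^ 2 - U ^ 2 + 4 * (2 * U ^ 2 - 486 * W ^ 2) ∧
        8 * Q = 729 * W ^ 2 - U ^ 2 + 8 * (2 * U ^ 2 - 486 * W ^ 2)) ∨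
       (4 ^ 3 * P = 729 * W ^ 2 - U ^ 2 + 4 * (2 * U ^ 2 - 486 * W ^ 2) ∧
        8 ^ 3 * Q = 729 * W ^ 2 - U ^ 2 + 8 * (2 * U ^ 2 - 486 * W ^ 2))) → U = 0 ∧ W = 0 := by
    rintro U W P Q (rfl | rfl | rfl) (rfl | rfl | rfl) (rfl | rfl | rfl) <;> revert U <;> decide
  have hre := congrArg (fun z => (z.re : ZMod 11)) hb
  have him := congrArg (fun z => (z.im : ZMod 11)) hb
  obtain ⟨hU0, hW0⟩ := key U W ((b.re + 4 * b.im) ^ 5)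
    ((b.re + 8 * b.im) ^ 5) (hW' ▸ fifth_zmod_eleven x) (fifth_zmod_eleven _)
    (fifth_zmod_eleven _) (by
      rw [← e4, ← e8]
      clear e4 e8 hR hS
      generalize b ^ 5 = B at *
      rcases hk13 with rfl | rfl
      · left
        simp at hre him
        constructor
        · linear_combination (-1) * hre - 4 * him + B.im * h11
        · linear_combination (-1) * hre - 8 * him + 5 * B.im * h11
      · right
        simp [pow_succ] at hre him
        constructor
        · linear_combination (-1) * hre - 4 * him + (5 * B.re + 22 * B.im) * h11
        · linear_combination (-1) * hre - 8 * him + (45 * B.re + 370 * B.im) * h11)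
  have p11 : Prime (11 : ℤ) := Int.prime_iff_natAbs_prime.2 (by norm_num)
  exact p11.not_isUnit (hUW.isUnit_of_dvd' ((ZMod.intCast_zmod_eq_zero_iff_dvd U 11).1 hU0)
    ((ZMod.intCast_zmod_eq_zero_iff_dvd W 11).1 hW0))

/-- The quintic `U ^ 4 - 150 * U ^ 2 * V ^ 2 + 1125 * V ^ 4 = y ^ 5` with `V` equal to `1125` times a fifth power:
the left side is `(U ^ 2 - 75 * V ^ 2) ^ 2 - 5 * (30 * V ^ 2) ^ 2`, so that `golden_norm` leads to
`dirichlet_descent`. -/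
lemma five_dvd_case {U V x y : ℤ} (hUV : IsCoprime U V) (hodd : Odd (U + V)) (h5U : ¬ 5 ∣ U)
    (hx0 : x ≠ 0) (hV : V = 1125 * x ^ 5)
    (hy : U ^ 4 - 150 * U ^ 2 * V ^ 2 + 1125 * V ^ 4 = y ^ 5) : False := by
  have p5 : Prime (5 : ℤ) := Int.prime_iff_natAbs_prime.2 (by norm_num)
  have h15V : 15 ∣ V := ⟨75 * x ^ 5, by rw [hV]; ring⟩
  have h5V : 5 ∣ V := ⟨225 * x ^ 5, by rw [hV]; ring⟩
  have hV0 : V ≠ 0 := by rw [hV]; positivity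
  have hnorm : (U ^ 2 - 75 * V ^ 2) ^ 2 - 5 * (30 * V ^ 2) ^ 2 = y ^ 5 := by rw [← hy]; ring
  have hUVo := hodd
  simp only [← Int.not_even_iff_odd, Int.even_add] at hUVo
  have hFodd : Odd (U ^ 2 - 75 * V ^ 2) := by
    simp +decide [← Int.not_even_iff_odd, Int.even_sub, Int.even_mul, Int.even_pow]
    tauto
  have hGodd : Odd (U ^ 2 - 75 * V ^ 2 + 30 * V ^ 2) :=
    hFodd.add_even (Even.mul_right (by decide) _)
  have hcop : IsCoprime (2 * (U ^ 2 - 75 * V ^ 2)) y := by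
    have hy2 : IsCoprime y 2 := by
      rw [isCoprime_comm, Int.prime_two.coprime_iff_not_dvd, ← even_iff_two_dvd]
      intro h
      have : Even (y ^ 5) := by rwa [Int.even_pow' (by norm_num)]
      rw [← hy] at this
      simp +decide [Int.even_add, Int.even_sub, Int.even_mul, Int.even_pow] at this
      tauto
    have hyV : IsCoprime y V := by
      have h1 : IsCoprime (y ^ 5) V := by
        have : y ^ 5 = U ^ 4 + V * (-150 * U ^ 2 * V + 1125 * V ^ 3) := by rw [← hy]; ring
        rw [this]
        exact (hUV.pow_left (m := 4)).add_mul_left_left _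
      exact h1.of_isCoprime_of_dvd_left (dvd_pow_self y (by norm_num))
    have hyF : IsCoprime y ((U ^ 2 - 75 * V ^ 2) ^ 2) := by
      have : (U ^ 2 - 75 * V ^ 2) ^ 2 = 2 ^ 2 * 15 ^ 2 * 5 * V ^ 4 + y * y ^ 4 := by
        linear_combination hnorm
      rw [this]
      refine IsCoprime.add_mul_left_right (IsCoprime.mul_right (IsCoprime.mul_right
        (IsCoprime.mul_right hy2.pow_right ?_) ?_) hyV.pow_right) _
      · exact (hyV.of_isCoprime_of_dvd_right h15V).pow_right
      · exact hyV.of_isCoprime_of_dvd_right h5V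
    exact (hy2.mul_right (hyF.of_isCoprime_of_dvd_right (dvd_pow_self _ two_ne_zero))).symm
  have hF5 : ¬ 5 ∣ U ^ 2 - 75 * V ^ 2 := fun h =>
    h5U (p5.dvd_of_dvd_pow ((dvd_sub_left ⟨15 * V ^ 2, by ring⟩).1 h))
  obtain ⟨f, g, hf, hg⟩ := golden_norm hnorm hcop hGodd hF5 ⟨6 * V ^ 2, by ring⟩
  have hprod : g * (f ^ 4 + 10 * f ^ 2 * g ^ 2 + 5 * g ^ 4) = 6 * V ^ 2 := by linarith
  have hg0 : g ≠ 0 := by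
    rintro rfl
    simp at hprod
    exact hV0 hprod
  have h5f : ¬ 5 ∣ f := fun h => hF5 (hf ▸ Dvd.dvd.mul_right h _)
  have hfgodd : Odd (f + g) := by
    rw [hf, hg] at hGodd
    simp +decide [← Int.not_even_iff_odd, Int.even_add, Int.even_mul, Int.even_pow] at hGodd ⊢
    tauto
  have hfg : IsCoprime f g := by
    have h1 : IsCoprime (U ^ 2 - 75 * V ^ 2) V := by
      have : U ^ 2 - 75 * V ^ 2 = U ^ 2 + V * (-75 * V) := by ring
      rw [this]
      exact (hUV.pow_left (m := 2)).add_mul_left_left _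
    have h2 : IsCoprime (U ^ 2 - 75 * V ^ 2) 2 := by
      rw [isCoprime_comm, Int.prime_two.coprime_iff_not_dvd, ← even_iff_two_dvd]
      simpa using hFodd
    have h3 : IsCoprime (U ^ 2 - 75 * V ^ 2) (30 * V ^ 2) := by
      have : (30 : ℤ) = 2 * 15 := by norm_num
      rw [this]
      exact (h2.mul_right (h1.of_isCoprime_of_dvd_right h15V)).mul_right h1.pow_right
    rw [hf, hg] at h3
    exact h3.of_mul_left_left.of_mul_right_left.of_mul_right_right
  obtain ⟨h30, hhg⟩ := quartic_coprime hfg hfgodd h5f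
  have h5g : 5 ∣ g := by
    have h1 : 5 ∣ g * (f ^ 4 + 10 * f ^ 2 * g ^ 2 + 5 * g ^ 4) := by
      rw [hprod]
      exact Dvd.dvd.mul_left (dvd_pow h5V two_ne_zero) _
    rcases p5.dvd_or_dvd h1 with h | h
    · exact h
    · exact absurd (h30.isUnit_of_dvd' h (by norm_num)) p5.not_isUnit
  have hC : (6 ^ 4 * 1125 ^ 3 : ℤ) ∣ 30 ^ 10 := by norm_num
  obtain ⟨⟨x', hx'⟩, ⟨y', hy'⟩⟩ := Int.eq_pow_of_mul_eq_pow_odd (k := 5)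
    (a := 6 ^ 4 * 1125 ^ 3 * g) (b := f ^ 4 + 10 * f ^ 2 * g ^ 2 + 5 * g ^ 4)
    (c := 6 * 1125 * x ^ 2) ((h30.pow_right.of_isCoprime_of_dvd_right hC).mul_right hhg).symm
    (by decide) (by rw [hV] at hprod; linear_combination 6 ^ 4 * 1125 ^ 3 * hprod)
  exact dirichlet_descent _ f g y' _ x' _ hfg hfgodd h5f h5g hg0 hy' hC hx' le_rfl

/-- The equation `c ^ 2 + 3 * (9 * e ^ 5) ^ 2 = b ^ 5`, via `c + 9 * e ^ 5 * √-3 = (U + V * √-3) ^ 5` and the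
factorization of `9 * e ^ 5` as `V * (5 * U ^ 4 - 30 * U ^ 2 * V ^ 2 + 9 * V ^ 4)`, where `V = 9 * W`. Whether
`5` divides `W` decides how the factors become fifth powers. -/
lemma sq_add_eq_fifth {b c e : ℤ} (h : c ^ 2 + 243 * e ^ 10 = b ^ 5) (hcb : IsCoprime (2 * c) b)
    (h3 : ¬ 3 ∣ c) (h5 : ¬ 5 ∣ c) (he : e ≠ 0) : False := by
  have p5 : Prime (5 : ℤ) := Int.prime_iff_natAbs_prime.2 (by norm_num)
  have hodd : Odd (c + 9 * e ^ 5) := by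
    have hb : ¬ 2 ∣ b := fun h => Int.prime_two.not_isUnit
      (hcb.isUnit_of_dvd' (dvd_mul_right 2 c) h)
    rw [← even_iff_two_dvd] at hb
    have : ¬ Even (b ^ 5) := by rwa [Int.even_pow' (by norm_num)]
    rw [← h] at this
    simp +decide [← Int.not_even_iff_odd, Int.even_add, Int.even_mul, Int.even_pow] at this ⊢
    tauto
  obtain ⟨U, V, hU, hV⟩ := eisenstein_norm (F := c) (G := 9 * e ^ 5) (y := b)
    (by rw [← h]; ring) hcb hodd
  have h3U : ¬ 3 ∣ U := fun h => h3 (hU ▸ Dvd.dvd.mul_right h _)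
  have h5U : ¬ 5 ∣ U := fun h => h5 (hU ▸ Dvd.dvd.mul_right h _)
  have hUV : IsCoprime U V := by
    have h1 : IsCoprime c (243 * e ^ 10) := by
      have : 243 * e ^ 10 = b ^ 5 + c * (-c) := by linear_combination h
      rw [this]
      exact (hcb.of_mul_left_right.pow_right).add_mul_left_right _
    have h2 : IsCoprime c (9 * e ^ 5) := h1.of_isCoprime_of_dvd_right ⟨27 * e ^ 5, by ring⟩
    rw [hU, hV] at h2
    exact h2.of_mul_left_left.of_mul_right_left
  have hUVodd : Odd (U + V) := by
    rw [hU, hV] at hodd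
    simp +decide [← Int.not_even_iff_odd, Int.even_add, Int.even_sub, Int.even_mul,
      Int.even_pow] at hodd ⊢
    tauto
  obtain ⟨W, rfl⟩ : (3 : ℤ) ^ 2 ∣ V := by
    have hd : 3 ^ 2 ∣ V * (5 * U ^ 4 - 30 * U ^ 2 * V ^ 2 + 9 * V ^ 4) := ⟨e ^ 5, by linarith⟩
    refine Int.prime_three.pow_dvd_of_dvd_mul_right 2 (fun h => ?_) hd
    have h' : 3 ∣ 5 * U ^ 4 := (Int.dvd_add_right
      (a := 3) (b := -30 * U ^ 2 * V ^ 2 + 9 * V ^ 4)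
      ⟨-10 * U ^ 2 * V ^ 2 + 3 * V ^ 4, by ring⟩).1 (by ring_nf at h ⊢; exact h)
    rcases Int.prime_three.dvd_or_dvd h' with h' | h'
    · norm_num at h'
    · exact h3U (Int.prime_three.dvd_of_dvd_pow h')
  have hW : W * (5 * U ^ 4 - 2430 * U ^ 2 * W ^ 2 + 59049 * W ^ 4) = e ^ 5 := by linarith
  have hUW : IsCoprime U W := hUV.of_mul_right_right
  have hUWodd : Odd (U + W) := by
    simp +decide [← Int.not_even_iff_odd, Int.even_add, Int.even_mul] at hUVodd ⊢
    exact hUVodd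
  by_cases h5W : 5 ∣ W
  · obtain ⟨w, rfl⟩ := h5W
    obtain ⟨e, rfl⟩ : 5 ∣ e := p5.dvd_of_dvd_pow (n := 5) (hW ▸ ⟨w * _, by rw [mul_assoc]⟩)
    have hT : w * (U ^ 4 - 12150 * U ^ 2 * w ^ 2 + 7381125 * w ^ 4) = 125 * e ^ 5 := by linarith
    obtain ⟨z, rfl⟩ : (5 : ℤ) ^ 3 ∣ w := by
      have hd : 5 ^ 3 ∣ w * (U ^ 4 - 12150 * U ^ 2 * w ^ 2 + 7381125 * w ^ 4) :=
        ⟨e ^ 5, by linarith⟩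
      refine p5.pow_dvd_of_dvd_mul_right 3 (fun h => ?_) hd
      have h' : 5 ∣ U ^ 4 := (Int.dvd_add_right
        (a := 5) (b := -12150 * U ^ 2 * w ^ 2 + 7381125 * w ^ 4)
        ⟨-2430 * U ^ 2 * w ^ 2 + 1476225 * w ^ 4, by ring⟩).1 (by ring_nf at h ⊢; exact h)
      exact h5U (p5.dvd_of_dvd_pow h')
    set T := U ^ 4 - 12150 * U ^ 2 * (5 ^ 3 * z) ^ 2 + 7381125 * (5 ^ 3 * z) ^ 4 with hTdef
    have hzT : IsCoprime z T := by
      have : T = U ^ 4 + z * (-12150 * 5 ^ 6 * U ^ 2 * z + 7381125 * 5 ^ 12 * z ^ 3) := by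
        rw [hTdef]; ring
      rw [this]
      exact (hUW.of_mul_right_right.of_mul_right_right.symm.pow_right).add_mul_left_right _
    obtain ⟨⟨x, rfl⟩, ⟨y, hy⟩⟩ := Int.eq_pow_of_mul_eq_pow_odd hzT (k := 5) (by decide)
      (show z * T = e ^ 5 by linarith)
    refine five_dvd_case (U := U) (V := 9 * (5 ^ 3 * x ^ 5)) (x := x) (y := y) ?_ ?_ h5U ?_
      (by ring) (by rw [← hy]; ring)
    · refine hUV.of_isCoprime_of_dvd_right ⟨5, by ring⟩
    · simp +decide [← Int.not_even_iff_odd, Int.even_add, Int.even_mul, Int.even_pow] at hUWodd ⊢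
      exact hUWodd
    · rintro rfl
      simp at hT
      exact he (by rw [hT]; simp)
  · have hWQ : IsCoprime W (5 * U ^ 4 - 2430 * U ^ 2 * W ^ 2 + 59049 * W ^ 4) := by
      have : 5 * U ^ 4 - 2430 * U ^ 2 * W ^ 2 + 59049 * W ^ 4 =
        5 * U ^ 4 + W * (-2430 * U ^ 2 * W + 59049 * W ^ 3) := by ring
      rw [this]
      refine IsCoprime.add_mul_left_right (IsCoprime.mul_right ?_ hUW.symm.pow_right) _
      exact (p5.coprime_iff_not_dvd.2 h5W).symm
    obtain ⟨⟨x, hx⟩, ⟨y, hy⟩⟩ := Int.eq_pow_of_mul_eq_pow_odd hWQ (by decide) hW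
    exact not_five_dvd_case hUW hUWodd h3U h5U h5W hx hy

/-! ### Rational points -/

lemma five_factor_pos {n D : ℤ} (hD : 0 < D) :
    0 < n ^ 4 + n ^ 3 * D + n ^ 2 * D ^ 2 + n * D ^ 3 + D ^ 4 := by
  have h4 : 0 < D ^ 4 := by positivity
  nlinarith [sq_nonneg (n ^ 2 + n * D / 2), sq_nonneg (2 * n ^ 2 + n * D), sq_nonneg (n * D + 2 * D ^ 2),
    sq_nonneg (n * D), sq_nonneg (n ^ 2)]

lemma not_three_dvd_five_factor {n D : ℤ} (hc : IsCoprime n D) :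
    ¬ (3 : ℤ) ∣ n ^ 4 + n ^ 3 * D + n ^ 2 * D ^ 2 + n * D ^ 3 + D ^ 4 := by
  intro h
  have key : ∀ x y : ZMod 3, x ^ 4 + x ^ 3 * y + x ^ 2 * y ^ 2 + x * y ^ 3 + y ^ 4 = 0 →
      x = 0 ∧ y = 0 := by decide
  have h' := (ZMod.intCast_zmod_eq_zero_iff_dvd _ 3).2 h
  push_cast at h'
  obtain ⟨h1, h2⟩ := key _ _ h'
  have h1 := (ZMod.intCast_zmod_eq_zero_iff_dvd _ 3).1 h1
  have h2 := (ZMod.intCast_zmod_eq_zero_iff_dvd _ 3).1 h2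
  have := hc.isUnit_of_dvd' h1 h2
  exact absurd this (by decide)

lemma coprime_five_factor_right {n D : ℤ} (hc : IsCoprime n D) :
    IsCoprime (n ^ 4 + n ^ 3 * D + n ^ 2 * D ^ 2 + n * D ^ 3 + D ^ 4) D := by
  have h : IsCoprime (n ^ 4 + D * (n ^ 3 + n ^ 2 * D + n * D ^ 2 + D ^ 3)) D :=
    (IsCoprime.pow_left hc).add_mul_left_left _
  convert h using 1
  ring

lemma isCoprime_three {x : ℤ} (h : ¬ (3 : ℤ) ∣ x) : IsCoprime x 3 :=
  ((Int.prime_three.coprime_iff_not_dvd).2 h).symm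

lemma isCoprime_five {x : ℤ} (h : ¬ (5 : ℤ) ∣ x) : IsCoprime x 5 := by
  have h5 : Prime (5 : ℤ) := by norm_num
  exact ((h5.coprime_iff_not_dvd).2 h).symm

/-- If `5 ∣ n - D`, write `n - D = 5 * m` and `Φ = 5 * P` with `Φ = (n ^ 5 - D ^ 5) / (n - D)`; then `P` is prime to
`3 * D * m`, hence a square, and `16 * P` is the quartic of `elliptic_descent` in `n + D` and `m`. -/
lemma eq_of_five_dvd_sub {n D z : ℤ} (hD : 0 < D) (hc : IsCoprime n D)
    (h : z ^ 2 = 3 * D * (n ^ 5 - D ^ 5)) (h5 : (5 : ℤ) ∣ n - D) : n = D := by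
  obtain ⟨m, hm⟩ := h5
  have p5 : Prime (5 : ℤ) := by norm_num
  have hn : n = D + 5 * m := by linarith
  have hD5 : ¬ (5 : ℤ) ∣ D := by
    intro hd
    have hd' : (5 : ℤ) ∣ n := by rw [hn]; exact dvd_add hd (dvd_mul_right _ _)
    exact absurd (hc.isUnit_of_dvd' hd' hd) (by decide)
  set P : ℤ := D ^ 4 + 5 * m * (2 * D ^ 3 + 10 * D ^ 2 * m + 25 * D * m ^ 2 + 25 * m ^ 3) with hP
  have hF : n ^ 4 + n ^ 3 * D + n ^ 2 * D ^ 2 + n * D ^ 3 + D ^ 4 = 5 * P := by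
    rw [hn, hP]; ring
  have hPpos : 0 < P := by
    have := five_factor_pos (n := n) hD
    linarith
  have hP5 : IsCoprime P 5 := isCoprime_five (by
    intro hd
    apply hD5
    apply p5.dvd_of_dvd_pow (n := 4)
    have : D ^ 4 = P - 5 * (m * (2 * D ^ 3 + 10 * D ^ 2 * m + 25 * D * m ^ 2 + 25 * m ^ 3)) := by
      rw [hP]; ring
    rw [this]
    exact dvd_sub hd (dvd_mul_right _ _))
  have hmD : IsCoprime D m := by
    have := hc.add_mul_left_left (-1)
    rw [show n + D * -1 = 5 * m by linarith] at this
    exact this.of_mul_left_right.symm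
  have hPm : IsCoprime P m := by
    have h1 : IsCoprime (D ^ 4 + m * (5 * (2 * D ^ 3 + 10 * D ^ 2 * m + 25 * D * m ^ 2 + 25 * m ^ 3))) m :=
      (IsCoprime.pow_left hmD).add_mul_left_left _
    convert h1 using 1
    rw [hP]; ring
  have hPD : IsCoprime P D := by
    have := coprime_five_factor_right hc
    rw [hF] at this
    exact this.of_mul_left_right
  have hP3 : IsCoprime P 3 := isCoprime_three (by
    intro hd
    apply not_three_dvd_five_factor hc
    rw [hF]
    exact hd.mul_left _)
  have hz : z ^ 2 = 25 * (P * (3 * D * m)) := by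
    rw [h]
    have : n ^ 5 - D ^ 5 = (n - D) * (n ^ 4 + n ^ 3 * D + n ^ 2 * D ^ 2 + n * D ^ 3 + D ^ 4) := by ring
    rw [this, hF, hm]; ring
  obtain ⟨w, rfl⟩ : (5 : ℤ) ∣ z := by
    apply p5.dvd_of_dvd_pow (n := 2)
    rw [hz]; exact ⟨5 * (P * (3 * D * m)), by ring⟩
  have hw : P * (3 * D * m) = w ^ 2 := by linarith
  obtain ⟨s, hs⟩ := Int.sq_of_isCoprime (((hP3.mul_right hPD).mul_right hPm)) hw
  have hs : P = s ^ 2 := by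
    rcases hs with hs | hs
    · exact hs
    · nlinarith [sq_nonneg s]
  have hquart : (n + D) ^ 4 + 50 * (n + D) ^ 2 * m ^ 2 + 125 * m ^ 4 = (4 * s) ^ 2 := by
    have : (4 * s) ^ 2 = 16 * P := by rw [hs]; ring
    rw [this, hP, hn]; ring
  have hnD : n + D = 2 * D + 5 * m := by rw [hn]; ring
  suffices m = 0 by rw [hn, this]; ring
  -- `n + D` and `m` have greatest common divisor `1` or `2`
  by_cases hm2 : (2 : ℤ) ∣ m
  · obtain ⟨k, rfl⟩ := hm2
    have hq : n + D = 2 * (D + 5 * k) := by rw [hnD]; ring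
    have hcop : IsCoprime (D + 5 * k) k := by
      have := (hmD.of_mul_right_right).add_mul_left_left 5
      rwa [mul_comm k 5] at this
    rw [hq] at hquart
    have := elliptic_descent _ (D + 5 * k) k s hcop (by linarith) le_rfl
    simp [this]
  · have h2m : IsCoprime 2 m := (Int.prime_two.coprime_iff_not_dvd).2 hm2
    have hcop : IsCoprime (n + D) m := by
      have := (h2m.mul_left hmD).add_mul_left_left 5
      rwa [hnD, mul_comm 5 m]
    exact elliptic_descent _ (n + D) m (4 * s) hcop hquart le_rfl

/-- If `5 ∤ n - D`, then `Φ = (n ^ 5 - D ^ 5) / (n - D)` is prime to `3 * D * (n - D)`, so both are squares.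
This forces `D = 3 * e ^ 2` and `n - D = r ^ 2`, and `n ^ 5 = (n - D) * Φ + D ^ 5` is an instance of
`sq_add_eq_fifth`. -/
lemma eq_of_not_five_dvd_sub {n D z : ℤ} (hD : 0 < D) (hc : IsCoprime n D)
    (h : z ^ 2 = 3 * D * (n ^ 5 - D ^ 5)) (h5 : ¬ (5 : ℤ) ∣ n - D) : False := by
  set F : ℤ := n ^ 4 + n ^ 3 * D + n ^ 2 * D ^ 2 + n * D ^ 3 + D ^ 4 with hF
  have p5 : Prime (5 : ℤ) := by norm_num
  have hFpos : 0 < F := five_factor_pos hD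
  have hFD : IsCoprime F D := coprime_five_factor_right hc
  have hndF : n ^ 5 - D ^ 5 = (n - D) * F := by rw [hF]; ring
  have hDnD : IsCoprime D (n - D) := by
    have := hc.symm.add_mul_left_right (-1)
    rwa [show n + D * -1 = n - D by ring] at this
  have hFnD : IsCoprime F (n - D) := by
    have h1 : IsCoprime (5 * D ^ 4) (n - D) :=
      IsCoprime.mul_left (isCoprime_five h5).symm (IsCoprime.pow_left hDnD)
    have h2 := h1.add_mul_left_left (n ^ 3 + 2 * n ^ 2 * D + 3 * n * D ^ 2 + 4 * D ^ 3)
    rwa [show 5 * D ^ 4 + (n - D) * (n ^ 3 + 2 * n ^ 2 * D + 3 * n * D ^ 2 + 4 * D ^ 3) = F by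
      rw [hF]; ring] at h2
  have h3F := not_three_dvd_five_factor hc
  rw [← hF] at h3F
  have hprod : F * (3 * D * (n - D)) = z ^ 2 := by rw [h, hndF]; ring
  have hcop : IsCoprime F (3 * D * (n - D)) := ((isCoprime_three h3F).mul_right hFD).mul_right hFnD
  obtain ⟨s, hs⟩ := Int.sq_of_isCoprime hcop hprod
  have hs : F = s ^ 2 := by
    rcases hs with hs | hs
    · exact hs
    · nlinarith [sq_nonneg s]
  obtain ⟨t, ht⟩ := Int.sq_of_isCoprime hcop.symm (by rw [mul_comm]; exact hprod)
  have hnD0 : 0 ≤ n - D := by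
    have : 0 ≤ (n - D) * (F * (3 * D)) := by
      have : (n - D) * (F * (3 * D)) = z ^ 2 := by rw [← hprod]; ring
      rw [this]; positivity
    exact nonneg_of_mul_nonneg_left this (by positivity)
  have hnD1 : 0 < n - D := lt_of_le_of_ne hnD0 (by intro h0; apply h5; rw [← h0]; exact dvd_zero _)
  have ht : 3 * D * (n - D) = t ^ 2 := by
    rcases ht with ht | ht
    · exact ht
    · have : 0 < 3 * D * (n - D) := by positivity
      nlinarith [sq_nonneg t]
  have h3nD : ¬ (3 : ℤ) ∣ n - D := by
    -- `n ≡ D` modulo `3` gives `F ≡ 2`, which is not a square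
    rintro ⟨m, hm⟩
    have key : ∀ y s : ZMod 3, y ^ 4 + y ^ 3 * y + y ^ 2 * y ^ 2 + y * y ^ 3 + y ^ 4 = s ^ 2 →
        y = 0 := by decide
    have e := congrArg (Int.cast (R := ZMod 3)) (hF.symm.trans hs)
    have hn : (n : ZMod 3) = D := by
      have : ((n - D : ℤ) : ZMod 3) = 0 := (ZMod.intCast_zmod_eq_zero_iff_dvd _ 3).2 ⟨m, hm⟩
      push_cast at this
      exact sub_eq_zero.1 this
    push_cast at e
    rw [hn] at e
    have h0 := key _ _ e
    have hd := (ZMod.intCast_zmod_eq_zero_iff_dvd _ 3).1 h0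
    have hd' := (ZMod.intCast_zmod_eq_zero_iff_dvd _ 3).1 (hn.trans h0)
    exact absurd (hc.isUnit_of_dvd' hd' hd) (by decide)
  obtain ⟨u, rfl⟩ : (3 : ℤ) ∣ t := by
    apply Int.prime_three.dvd_of_dvd_pow (n := 2)
    rw [← ht]; exact ⟨D * (n - D), by ring⟩
  obtain ⟨E, rfl⟩ : (3 : ℤ) ∣ D := by
    have : (3 : ℤ) ∣ D * (n - D) := ⟨u ^ 2, by linarith⟩
    exact (Int.prime_three.dvd_or_dvd this).resolve_right h3nD
  have hu : E * (n - 3 * E) = u ^ 2 := by linarith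
  have hEc : IsCoprime E (n - 3 * E) := hDnD.of_mul_left_right
  obtain ⟨e, he⟩ := Int.sq_of_isCoprime hEc hu
  have he : E = e ^ 2 := by
    rcases he with he | he
    · exact he
    · nlinarith [sq_nonneg e]
  obtain ⟨r, hr⟩ := Int.sq_of_isCoprime hEc.symm (by rw [mul_comm]; exact hu)
  have hr : n - 3 * E = r ^ 2 := by
    rcases hr with hr | hr
    · exact hr
    · nlinarith [sq_nonneg r]
  subst he
  have hmain : (r * s) ^ 2 + 243 * e ^ 10 = n ^ 5 := by
    have : (r * s) ^ 2 = n ^ 5 - (3 * e ^ 2) ^ 5 := by rw [hndF, hr, hs]; ring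
    rw [this]; ring
  have h5F : ¬ (5 : ℤ) ∣ F := by
    intro hd
    have key : ∀ x y : ZMod 5, x ^ 5 - y ^ 5 = 0 → x - y = 0 := by decide
    apply h5
    have e5 := congrArg (Int.cast (R := ZMod 5)) hndF
    have hd' := (ZMod.intCast_zmod_eq_zero_iff_dvd _ 5).2 hd
    push_cast at e5
    rw [hd', mul_zero] at e5
    have := key _ ((3 * e ^ 2 : ℤ) : ZMod 5) (by push_cast; exact e5)
    rw [← Int.cast_sub] at this
    exact (ZMod.intCast_zmod_eq_zero_iff_dvd _ 5).1 this
  have hr3 : ¬ (3 : ℤ) ∣ r := fun hd => h3nD (by rw [hr]; exact dvd_pow hd two_ne_zero)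
  have hs3 : ¬ (3 : ℤ) ∣ s := fun hd => h3F (by rw [hs]; exact dvd_pow hd two_ne_zero)
  have hr5 : ¬ (5 : ℤ) ∣ r := fun hd => h5 (by rw [hr]; exact dvd_pow hd two_ne_zero)
  have hs5 : ¬ (5 : ℤ) ∣ s := fun hd => h5F (by rw [hs]; exact dvd_pow hd two_ne_zero)
  have hne : IsCoprime n e := by
    have := hc.of_mul_right_right
    rw [pow_two] at this
    exact this.of_mul_right_right
  have hn3 : IsCoprime n 3 := hc.of_mul_right_left
  have hcn : IsCoprime (r * s) n := by
    have h1 : IsCoprime (-(243 * e ^ 10)) n := by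
      have : IsCoprime (3 ^ 5 * e ^ 10) n :=
        ((IsCoprime.pow_left hn3.symm)).mul_left (IsCoprime.pow_left hne.symm)
      exact (by simpa using this : IsCoprime (243 * e ^ 10) n).neg_left
    have h2 := h1.add_mul_left_left (n ^ 4)
    have h3 : IsCoprime ((r * s) ^ 2) n := by
      rwa [show -(243 * e ^ 10) + n * n ^ 4 = (r * s) ^ 2 by linarith] at h2
    exact (IsCoprime.pow_left_iff two_pos).1 h3
  have hn2 : ¬ (2 : ℤ) ∣ n := by
    intro hd
    -- otherwise `r * s` and `e` are odd, and the left side of `hmain` is `4` modulo `8`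
    have he2 : ¬ (2 : ℤ) ∣ e := fun h2 => absurd (hne.isUnit_of_dvd' hd h2) (by decide)
    have key : ∀ x y : ZMod 8, x ^ 2 + 243 * y ^ 10 = 0 → (4 : ZMod 8) * y = 0 := by decide
    obtain ⟨k, rfl⟩ := hd
    have e8 := congrArg (Int.cast (R := ZMod 8)) hmain
    have : ((2 * k) ^ 5 : ℤ) = 8 * (4 * k ^ 5) := by ring
    rw [this] at e8
    push_cast at e8
    rw [show (8 : ZMod 8) = 0 from rfl, zero_mul] at e8
    have h4 := key ((r : ZMod 8) * s) e e8
    have h4 := (ZMod.intCast_zmod_eq_zero_iff_dvd (4 * e) 8).1 (by push_cast; exact h4)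
    omega
  refine sq_add_eq_fifth hmain ?_ ?_ ?_ ?_
  · exact IsCoprime.mul_left ((Int.prime_two.coprime_iff_not_dvd).2 hn2) hcn
  · exact fun hd => (Int.prime_three.dvd_or_dvd hd).elim hr3 hs3
  · exact fun hd => (p5.dvd_or_dvd hd).elim hr5 hs5
  · rintro rfl; simp at hD

theorem rational_points_C1 (X Y : ℚ) (h : Y ^ 2 = 3 * (X ^ 5 - 1)) :
    X = 1 ∧ Y = 0 := by
  have hD : (0 : ℤ) < X.den := by exact_mod_cast X.den_pos
  have hDQ : (X.den : ℚ) ≠ 0 := by exact_mod_cast X.den_ne_zero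
  have hc : IsCoprime X.num (X.den : ℤ) := Int.isCoprime_iff_gcd_eq_one.2 X.reduced
  have hX : X * X.den = X.num := Rat.mul_den_eq_num X
  have hZ : (Y * X.den ^ 3) ^ 2 =
      ((3 * (X.den : ℤ) * (X.num ^ 5 - (X.den : ℤ) ^ 5) : ℤ) : ℚ) := by
    push_cast
    rw [← hX, mul_pow, h]
    ring
  obtain ⟨z, hz⟩ : ∃ z : ℤ, z * z = 3 * (X.den : ℤ) * (X.num ^ 5 - (X.den : ℤ) ^ 5) := by
    have : IsSquare ((3 * (X.den : ℤ) * (X.num ^ 5 - (X.den : ℤ) ^ 5) : ℤ) : ℚ) :=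
      ⟨Y * X.den ^ 3, by rw [← hZ]; ring⟩
    obtain ⟨z, hz⟩ := Rat.isSquare_intCast_iff.1 this
    exact ⟨z, hz.symm⟩
  have hnD : X.num = X.den := by
    have hz' : z ^ 2 = 3 * (X.den : ℤ) * (X.num ^ 5 - (X.den : ℤ) ^ 5) := by rw [pow_two, hz]
    by_cases h5 : (5 : ℤ) ∣ X.num - X.den
    · exact eq_of_five_dvd_sub hD hc hz' h5
    · exact (eq_of_not_five_dvd_sub hD hc hz' h5).elim
  have hX1 : X = 1 := by
    rw [hnD] at hX
    push_cast at hX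
    exact mul_right_cancel₀ hDQ (by rw [hX, one_mul])
  refine ⟨hX1, ?_⟩
  rw [hX1] at h
  norm_num at h
  exact h
end

section
/- The only rational point (X, Y) ∈ Q × Q on the affine curve Y^2 = X^5 - 3^7 is: there are none (the genus 2 curve Y^2 = X^5 - 2187 has no affine rational points). -/
/-!
A rational point on `Y ^ 2 = X ^ 5 - 3 ^ 7` has `X = A / e ^ 2`, so it gives coprime integers
`A, e` with `B ^ 2 + 2187 * e ^ 10 = A ^ 5`. The argument below is elementary: two factorisations
in norm-Euclidean quadratic rings followed by an infinite descent.

* In `ℤ[(1 + √-3)/2]` the element `B + 27 e ^ 5 √-3` has norm `A ^ 5` and is coprime to its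
  conjugate, so it is a fifth power `(u + v √-3) ^ 5`. Comparing coefficients of `√-3` gives
  `27 e ^ 5 = v (5 u ^ 4 - 30 u ^ 2 v ^ 2 + 9 v ^ 4)` with `27 ∣ v` (`exists_uv`). If `5 ∤ v`, then
  `v = 27 s ^ 5` and the quartic factor is a fifth power, which is impossible modulo `25`
  (`five_dvd_of_uv`).
* If `5 ∣ v`, then `v = 16875 k` and
  `u ^ 4 - 6 u ^ 2 v ^ 2 + (9 / 5) v ^ 4 = (u ^ 2 - 3 v ^ 2) ^ 2 - 5 (6 v ^ 2 / 5) ^ 2` is a fifth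
  power (`exists_WNt`). In `ℤ[(1 + √5)/2]` the corresponding element is a unit times a fifth power;
  the congruence `6 v ^ 2 / 5 ≡ 0` modulo `5` forces the unit to be a fifth power too, so the
  element is `(x + y √5) ^ 5`. The coefficient of `√5` is `5 y (x ^ 4 + 10 x ^ 2 y ^ 2 + 5 y ^ 4)`,
  and as it is `341718750 k ^ 2`, the quartic factor is a square (`no_WNt`).
* The quartic `x ^ 4 + 10 x ^ 2 y ^ 2 + 5 y ^ 4 = z ^ 2` does have nontrivial solutions, for example
  `(1, 1, 4)`. However, in the case at hand `30 ∣ y`, `x ≡ ±1` modulo `12`, and every divisor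
  `p` of `y` that is coprime to `6 y / p` is `± 1` modulo `12`. Two halving steps
  (`first_halving`, then `second_halving_even` or `second_halving_odd`) either contradict the
  congruence on `x` or produce a smaller solution with the same three properties, whence
  `no_quartic_solution`.
-/

/-! ### Fifth powers in two quadratic rings -/

/-- The ring `ℤ[ω]` with `ω ^ 2 = a + ω`, of discriminant `1 + 4 * a`. It is used for `a = -1`, the
Eisenstein integers `ℤ[(1 + √-3)/2]`, and `a = 1`, the golden ring `ℤ[(1 + √5)/2]`. In both cases
`√(1 + 4 * a) = 2 ω - 1`, so `W + N √(1 + 4 * a)` is the element `⟨W - N, 2 * N⟩`. -/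
abbrev QInt (a : ℤ) := QuadraticAlgebra ℤ a 1

namespace QInt

open QuadraticAlgebra

variable {a : ℤ}

lemma norm_eq_zero (ha : a = 1 ∨ a = -1) {z : QInt a} (h : norm z = 0) : z = 0 := by
  rw [norm_def] at h
  rcases ha with rfl | rfl
  · have h5 : z.im = 0 := by
      by_contra hne
      have hp : (5 : ℤ) * z.im ^ 2 = (2 * z.re + z.im) ^ 2 := by linarith
      have : IsSquare (5 : ℚ) := by
        refine ⟨((2 * z.re + z.im : ℤ) : ℚ) / z.im, ?_⟩
        have hz : (z.im : ℚ) ≠ 0 := by exact_mod_cast hne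
        field_simp
        exact_mod_cast hp
      rw [show (5 : ℚ) = ((5 : ℕ) : ℚ) by norm_num, Rat.isSquare_natCast_iff] at this
      exact (Nat.Prime.prime (by norm_num : Nat.Prime 5)).irreducible.not_isSquare this
    have : z.re = 0 := by rw [h5] at h; simpa using h
    ext <;> simp [*]
  · have h5 : z.im = 0 := by nlinarith [sq_nonneg (2 * z.re + z.im), sq_nonneg z.im]
    have : z.re = 0 := by rw [h5] at h; simpa using h
    ext <;> simp [*]

lemma isDomain (ha : a = 1 ∨ a = -1) : IsDomain (QInt a) := by
  have : NoZeroDivisors (QInt a) := ⟨by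
    intro x y hxy
    have : norm x * norm y = 0 := by rw [← map_mul, hxy, QuadraticAlgebra.norm_zero]
    rcases mul_eq_zero.1 this with h | h
    · exact Or.inl (norm_eq_zero ha h)
    · exact Or.inr (norm_eq_zero ha h)⟩
  exact NoZeroDivisors.to_isDomain _

/-- Division with remainder of smallest absolute value. -/
lemma exists_round (m N : ℤ) (hN : N ≠ 0) : ∃ q : ℤ, (2 * (m - N * q)) ^ 2 ≤ N ^ 2 := by
  refine ⟨round ((m : ℚ) / N), ?_⟩
  have h := abs_sub_round ((m : ℚ) / N)
  have hN' : (N : ℚ) ≠ 0 := by exact_mod_cast hN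
  have h2 : ((2 * (m - N * (round ((m : ℚ) / N) : ℤ)) : ℚ)) =
      2 * N * ((m : ℚ) / N - round ((m : ℚ) / N)) := by
    field_simp
  have h3 : ((2 * (m - N * (round ((m : ℚ) / N) : ℤ)) : ℚ)) ^ 2 ≤ N ^ 2 := by
    rw [h2, mul_pow, mul_pow, ← sq_abs ((m : ℚ) / N - _)]
    have : |(m : ℚ) / N - round ((m : ℚ) / N)| ^ 2 ≤ (1 / 2) ^ 2 := by gcongr
    nlinarith [sq_nonneg (N : ℚ)]
  exact_mod_cast h3

/-- `QInt a` is norm-Euclidean: approximate `x / y = x * star y / norm y` by rounding both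
coordinates, and bound `|r ^ 2 + r s - a s ^ 2|` for `|r|, |s| ≤ |norm y| / 2`. -/
lemma exists_div (ha : a = 1 ∨ a = -1) (x y : QInt a) (hy : y ≠ 0) :
    ∃ q, |norm (x - y * q)| < |norm y| := by
  have hN : norm y ≠ 0 := fun h => hy (norm_eq_zero ha h)
  obtain ⟨q1, h1⟩ := exists_round (x * star y).re (norm y) hN
  obtain ⟨q2, h2⟩ := exists_round (x * star y).im (norm y) hN
  refine ⟨⟨q1, q2⟩, ?_⟩
  have key : norm (x - y * ⟨q1, q2⟩) * norm y =
      norm (⟨(x * star y).re - norm y * q1, (x * star y).im - norm y * q2⟩ : QInt a) := by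
    rw [← norm_star y, ← map_mul]
    congr 1
    ext <;> simp [norm_def] <;> ring
  set r := (x * star y).re - norm y * q1
  set s := (x * star y).im - norm y * q2
  set n := norm y
  have hn : 0 < n ^ 2 := by positivity
  have hb : |norm (⟨r, s⟩ : QInt a)| < n ^ 2 := by
    rw [norm_def, abs_lt]
    rcases ha with rfl | rfl <;> constructor <;> simp only [] <;>
      nlinarith [sq_nonneg (r - s), sq_nonneg (r + s), sq_nonneg r, sq_nonneg s]
  rw [← key, abs_mul, ← sq_abs n, sq] at hb
  exact lt_of_mul_lt_mul_right hb (abs_nonneg _)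

lemma isPrincipalIdealRing (ha : a = 1 ∨ a = -1) : IsPrincipalIdealRing (QInt a) := by
  refine ⟨fun I => ?_⟩
  by_cases hI : I = ⊥
  · subst hI; exact bot_isPrincipal
  obtain ⟨z, hz, hz0⟩ := Submodule.exists_mem_ne_zero_of_ne_bot hI
  have hex : ∃ n : ℕ, ∃ y ∈ I, y ≠ 0 ∧ (norm y).natAbs = n := ⟨_, z, hz, hz0, rfl⟩
  classical
  obtain ⟨y, hy, hy0, hyn⟩ := Nat.find_spec hex
  refine ⟨⟨y, le_antisymm (fun x hx => ?_) ?_⟩⟩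
  · obtain ⟨q, hq⟩ := exists_div ha x y hy0
    have hr : x - y * q = 0 := by
      by_contra hne
      have hlt : (norm (x - y * q)).natAbs < Nat.find hex := by
        rw [← hyn]; zify; exact hq
      exact Nat.find_min hex hlt ⟨_, I.sub_mem hx (I.mul_mem_right _ hy), hne, rfl⟩
    exact Ideal.mem_span_singleton.2 ⟨q, sub_eq_zero.1 hr⟩
  · exact (Ideal.span_singleton_le_iff_mem I).2 hy

/-- If the norm of `W + N √(1 + 4 * a)` is a fifth power `t ^ 5` with `t` coprime to `2 * W`, then the
element is coprime to its conjugate, the sum of the two being `2 * W`. Hence it is a unit times a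
fifth power. -/
lemma exists_pow_five (ha : a = 1 ∨ a = -1) {W N t : ℤ} (h : W ^ 2 - (1 + 4 * a) * N ^ 2 = t ^ 5)
    (hc : IsCoprime (2 * W) t) :
    ∃ β η : QInt a, IsUnit η ∧ (⟨W - N, 2 * N⟩ : QInt a) = η * β ^ 5 := by
  have := isDomain ha
  have := isPrincipalIdealRing ha
  set α : QInt a := ⟨W - N, 2 * N⟩ with hα
  have hmul : α * star α = ((t : ℤ) : QInt a) ^ 5 := by
    have hn : norm α = t ^ 5 := by
      rw [← h, norm_def]; simp only [hα]; ring
    rw [← algebraMap_norm_eq_mul_star, hn]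
    simp
  have hcop : IsCoprime α (star α) := by
    obtain ⟨u, v, huv⟩ := hc.pow_right (n := 5)
    have hs : α + star α = ((2 * W : ℤ) : QInt a) := by
      ext <;> simp [hα] ; ring
    refine ⟨u + star α * v, u, ?_⟩
    have : (u : QInt a) * ((2 * W : ℤ) : QInt a) + v * ((t : ℤ) : QInt a) ^ 5 = 1 := by
      exact_mod_cast congrArg (Int.cast : ℤ → QInt a) huv
    rw [← hs, ← hmul] at this
    linear_combination this
  obtain ⟨β, η, hη⟩ := exists_associated_pow_of_mul_eq_pow' hcop hmul
  exact ⟨β, η, η.isUnit, by rw [mul_comm]; exact hη.symm⟩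

lemma re_pow_five (z : QInt a) : (z ^ 5).re = z.re ^ 5 + 10 * a * z.re ^ 3 * z.im ^ 2
    + 10 * a * z.re ^ 2 * z.im ^ 3 + 5 * a * (a + 1) * z.re * z.im ^ 4
    + a * (2 * a + 1) * z.im ^ 5 := by
  simp only [pow_succ, pow_zero, one_mul, re_mul, im_mul]; ring

lemma im_pow_five (z : QInt a) : (z ^ 5).im = 5 * z.re ^ 4 * z.im + 10 * z.re ^ 3 * z.im ^ 2
    + 10 * (a + 1) * z.re ^ 2 * z.im ^ 3 + 5 * (2 * a + 1) * z.re * z.im ^ 4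
    + (a ^ 2 + 3 * a + 1) * z.im ^ 5 := by
  simp only [pow_succ, pow_zero, one_mul, re_mul, im_mul]; ring

/-- The elements of odd norm form a group of order `3` modulo `2`, on which taking fifth powers is
inversion. So a fifth root of an element of `ℤ[√(1 + 4 * a)]` again lies in that subring. -/
lemma even_im_of_pow_five (ha : a = 1 ∨ a = -1) (z : QInt a) (hn : Odd (norm z))
    (h : Even (z ^ 5).im) : Even z.im := by
  rw [im_pow_five] at h
  rw [norm_def] at hn
  rw [← ZMod.intCast_eq_one_iff_odd] at hn
  rw [← ZMod.intCast_eq_zero_iff_even] at h ⊢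
  push_cast at h hn
  generalize (z.re : ZMod 2) = r at *
  generalize (z.im : ZMod 2) = s at *
  rcases ha with rfl | rfl <;> revert r s <;> push_cast <;> decide

/-- Units of the Eisenstein integers are sixth roots of unity, so each is a fifth power. -/
lemma isUnit_neg_one_pow {η : QInt (-1)} (h : IsUnit η) : η = (η ^ 5) ^ 5 := by
  have h6 : η ^ 6 = 1 := by
    rw [isUnit_iff_norm_isUnit, Int.isUnit_iff, norm_def] at h
    obtain ⟨r, s⟩ := η
    simp only at h
    have hr : r ^ 2 ≤ 1 := by
      by_contra! hlt
      rcases h with h | h <;> nlinarith [sq_nonneg (r + 2 * s)]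
    have hs : s ^ 2 ≤ 1 := by
      by_contra! hlt
      rcases h with h | h <;> nlinarith [sq_nonneg (s + 2 * r)]
    have : -1 ≤ r ∧ r ≤ 1 := by constructor <;> nlinarith
    have : -1 ≤ s ∧ s ≤ 1 := by constructor <;> nlinarith
    obtain ⟨_, _⟩ := this
    obtain ⟨_, _⟩ := ‹-1 ≤ r ∧ r ≤ 1›
    interval_cases r <;> interval_cases s <;> first | (exfalso; omega) | (ext <;> simp [pow_succ])
  calc η = η * (η ^ 6) ^ 4 := by rw [h6]; simp
    _ = _ := by ring

/-- Units of `ℤ[(1 + √5)/2]` modulo fifth powers are generated by `ω`. A unit `r + s ω` is made smaller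
by multiplying it with `ω⁻¹ = ω - 1` when `r s > 0` and with `ω` when `r s < 0`. -/
lemma isUnit_one_form (η : QInt 1) (h : IsUnit η) :
    ∃ r < 5, ∃ γ : QInt 1, η = ω ^ r * γ ^ 5 := by
  have hω : (ω : QInt 1) * (ω - 1) = 1 := by ext <;> simp
  induction hk : η.re.natAbs + η.im.natAbs using Nat.strong_induction_on generalizing η with
  | _ k ih =>
  have hn := h
  rw [isUnit_iff_norm_isUnit, Int.isUnit_iff, norm_def] at hn
  by_cases h0 : η.im = 0
  · have : η = 1 ∨ η = -1 := by
      rw [h0] at hn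
      have : η.re ^ 2 = 1 := by
        rcases hn with hn | hn <;> nlinarith
      rcases eq_or_eq_neg_of_sq_eq_sq η.re 1 (by rw [this]; norm_num) with h | h
      · left; ext <;> simp [*]
      · right; ext <;> simp [*]
    rcases this with rfl | rfl
    · exact ⟨0, by norm_num, 1, by simp⟩
    · exact ⟨0, by norm_num, -1, by ext <;> simp [pow_succ]⟩
  by_cases h1 : η.re = 0
  · have : η = ω ∨ η = -ω := by
      rw [h1] at hn
      have : η.im ^ 2 = 1 := by
        rcases hn with hn | hn <;> nlinarith
      rcases eq_or_eq_neg_of_sq_eq_sq η.im 1 (by rw [this]; norm_num) with h | h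
      · left; ext <;> simp [*]
      · right; ext <;> simp [*]
    rcases this with rfl | rfl
    · exact ⟨1, by norm_num, 1, by simp⟩
    · exact ⟨1, by norm_num, -1, by ext <;> simp [pow_succ]⟩
  by_cases hs : 0 ≤ η.re * η.im
  · have hu : IsUnit (η * (ω - 1)) := h.mul (IsUnit.of_mul_eq_one _ (by rw [mul_comm]; exact hω))
    have hlt : (η * (ω - 1)).re.natAbs + (η * (ω - 1)).im.natAbs < k := by
      have e1 : (η * (ω - 1)).re = η.im - η.re := by simp; ring
      have e2 : (η * (ω - 1)).im = η.re := by simp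
      rw [e1, e2, ← hk]
      have hle : η.re ^ 2 ≤ η.im ^ 2 := by
        by_contra! hlt
        have : 2 ≤ η.re * η.im + (η.re ^ 2 - η.im ^ 2) := by
          have : η.re * η.im ≠ 0 := mul_ne_zero h1 h0
          omega
        rcases hn with hn | hn <;> nlinarith
      rw [sq_le_sq, Int.abs_eq_natAbs, Int.abs_eq_natAbs] at hle
      rcases lt_or_gt_of_ne h1 with h | h
      · have : η.im < 0 := by
          by_contra! h'
          have := mul_neg_of_neg_of_pos h (lt_of_le_of_ne h' (Ne.symm h0))
          linarith
        omega
      · have : 0 < η.im := by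
          by_contra! h'
          have := mul_neg_of_pos_of_neg h (lt_of_le_of_ne h' h0)
          linarith
        omega
    obtain ⟨r, hr, γ, hγ⟩ := ih _ hlt (η * (ω - 1)) hu rfl
    have he : η = ω ^ (r + 1) * γ ^ 5 := by
      linear_combination (-η) * hω + ω * hγ
    by_cases h4 : r = 4
    · subst h4
      exact ⟨0, by norm_num, ω * γ, by rw [he]; ring⟩
    · exact ⟨r + 1, by omega, γ, he⟩
  · have hu : IsUnit (η * ω) := h.mul (IsUnit.of_mul_eq_one _ hω)
    have hlt : (η * ω).re.natAbs + (η * ω).im.natAbs < k := by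
      have e1 : (η * ω).re = η.im := by simp
      have e2 : (η * ω).im = η.re + η.im := by simp
      rw [e1, e2, ← hk]
      have hle : η.im ^ 2 ≤ η.re ^ 2 := by
        by_contra! hlt
        rcases hn with hn | hn <;> nlinarith
      rw [sq_le_sq, Int.abs_eq_natAbs, Int.abs_eq_natAbs] at hle
      rcases lt_or_gt_of_ne h1 with h | h
      · have : 0 < η.im := by
          by_contra! h'
          nlinarith
        omega
      · have : η.im < 0 := by
          by_contra! h'
          nlinarith
        omega
    obtain ⟨r, hr, γ, hγ⟩ := ih _ hlt (η * ω) hu rfl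
    have he : η = (ω - 1) * ω ^ r * γ ^ 5 := by
      linear_combination (-η) * hω + (ω - 1) * hγ
    rcases r with _ | r
    · refine ⟨4, by norm_num, (ω - 1) * γ, ?_⟩
      have : (ω : QInt 1) ^ 4 * (ω - 1) ^ 4 = 1 := by rw [← mul_pow, hω, one_pow]
      rw [he]
      linear_combination (-(ω - 1) * γ ^ 5) * this
    · refine ⟨r, by omega, γ, ?_⟩
      rw [he]
      linear_combination (ω ^ r * γ ^ 5) * hω

/-- The real and imaginary parts of `W + N √-3 = (u + v √-3) ^ 5`. -/
lemma pow_five_sqrt_neg_three {W N t : ℤ} (h : W ^ 2 + 3 * N ^ 2 = t ^ 5)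
    (hc : IsCoprime (2 * W) t) : ∃ u v : ℤ, W = u * (u ^ 4 - 30 * u ^ 2 * v ^ 2 + 45 * v ^ 4) ∧
      N = v * (5 * u ^ 4 - 30 * u ^ 2 * v ^ 2 + 9 * v ^ 4) := by
  obtain ⟨β, η, hη, he⟩ := exists_pow_five (a := -1) (N := N) (Or.inr rfl)
    (by linear_combination h) hc
  rw [isUnit_neg_one_pow hη, ← mul_pow] at he
  generalize η ^ 5 * β = z at he
  have hn : norm z ^ 5 = t ^ 5 := by
    rw [← map_pow, ← he, ← h, norm_def]; ring
  have ho : Odd (norm z) := by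
    have : Odd (t ^ 5) := by
      have := (IsCoprime.of_mul_left_left hc)
      exact (Int.isCoprime_two_left.1 this).pow
    rw [← hn] at this
    exact (Int.odd_pow' (by norm_num)).1 this
  obtain ⟨v, hv⟩ := even_im_of_pow_five (Or.inr rfl) z ho (by rw [← he]; exact even_two_mul N)
  have h1 := congrArg re he
  have h2 := congrArg im he
  rw [re_pow_five, hv] at h1
  rw [im_pow_five, hv] at h2
  simp only at h1 h2
  refine ⟨z.re + v, v, ?_, ?_⟩
  · linarith
  · linarith

/-- The two coordinates of `W + N √5 = (x + y √5) ^ 5`. The conditions at `5` exclude the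
nontrivial units `ω ^ r`, `0 < r < 5`, modulo fifth powers. -/
lemma pow_five_sqrt_five {W N t : ℤ} (h : W ^ 2 - 5 * N ^ 2 = t ^ 5)
    (hc : IsCoprime (2 * W) t) (hW : ¬ 5 ∣ W) (hN : 5 ∣ N) :
    ∃ x y : ℤ, W = x * (x ^ 4 + 50 * x ^ 2 * y ^ 2 + 125 * y ^ 4) ∧
      N = 5 * y * (x ^ 4 + 10 * x ^ 2 * y ^ 2 + 5 * y ^ 4) := by
  obtain ⟨β, η, hη, he⟩ := exists_pow_five (a := 1) (N := N) (Or.inl rfl)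
    (by linear_combination h) hc
  obtain ⟨r, hr, γ, rfl⟩ := isUnit_one_form η hη
  rw [mul_assoc, ← mul_pow] at he
  generalize γ * β = z at he
  have h1 := congrArg re he
  have h2 := congrArg im he
  -- Modulo `5` a fifth power `z ^ 5` is congruent to an integer, and `5 ∣ N` says the same of
  -- `ω ^ r * z ^ 5`, while `5 ∤ W` makes `z` invertible modulo `√5`.
  have hr0 : r = 0 := by
    have hN := (ZMod.intCast_zmod_eq_zero_iff_dvd N 5).2 hN
    have hW := mt (ZMod.intCast_zmod_eq_zero_iff_dvd W 5).1 hW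
    have h1 := congrArg (Int.cast : ℤ → ZMod 5) h1
    have h2 := congrArg (Int.cast : ℤ → ZMod 5) h2
    clear he
    interval_cases r
    · rfl
    all_goals
      exfalso
      simp only [pow_succ (ω : QInt 1), pow_zero, one_mul, re_mul, im_mul, omega_re, omega_im,
        re_pow_five, im_pow_five] at h1 h2
      push_cast at h1 h2
      rw [hN] at h1 h2
      generalize (z.re : ZMod 5) = a at *
      generalize (z.im : ZMod 5) = b at *
      generalize (W : ZMod 5) = w at *
      revert a b w
      decide
  subst hr0
  rw [pow_zero, one_mul] at he h1 h2
  have hn : norm z ^ 5 = t ^ 5 := by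
    rw [← map_pow, ← he, ← h, norm_def]; ring
  have ho : Odd (norm z) := by
    have : Odd (t ^ 5) := by
      have := (IsCoprime.of_mul_left_left hc)
      exact (Int.isCoprime_two_left.1 this).pow
    rw [← hn] at this
    exact (Int.odd_pow' (by norm_num)).1 this
  obtain ⟨v, hv⟩ := even_im_of_pow_five (Or.inl rfl) z ho (by rw [← he]; exact even_two_mul N)
  rw [re_pow_five, hv] at h1
  rw [im_pow_five, hv] at h2
  simp only at h1 h2
  refine ⟨z.re + v, v, ?_, ?_⟩
  · linarith
  · linarith

end QInt

/-! ### Descent on `x ^ 4 + 10 x ^ 2 y ^ 2 + 5 y ^ 4 = z ^ 2` -/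

lemma coprime_of_prime {a b : ℤ} (h0 : a ≠ 0) (h : ∀ p : ℤ, Prime p → p ∣ a → p ∣ b → False) :
    IsCoprime a b :=
  isCoprime_of_prime_dvd (fun hh => h0 hh.1) fun p hp h1 h2 => h p hp h1 h2

lemma not_prime_dvd {a b p : ℤ} (h : IsCoprime a b) (hp : Prime p) (ha : p ∣ a) (hb : p ∣ b) :
    False :=
  hp.not_isUnit (h.isUnit_of_dvd' ha hb)

lemma cast_ne_zero_of_coprime {a b : ℤ} {n : ℕ} (hn : 1 < n) (h : IsCoprime a b)
    (ha : (a : ZMod n) = 0) : (b : ZMod n) ≠ 0 := by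
  obtain ⟨u, v, huv⟩ := h
  have : Fact (1 < n) := ⟨hn⟩
  intro hb
  have := congrArg (Int.cast : ℤ → ZMod n) huv
  push_cast at this
  rw [ha, hb] at this
  simp at this

lemma cast_eq_zero_of_dvd {a : ℤ} (n : ℕ) [NeZero n] (h : (n : ℤ) ∣ a) : (a : ZMod n) = 0 :=
  (ZMod.intCast_zmod_eq_zero_iff_dvd a n).2 h

/-- The case `5 ∣ P` of `five_mul_fourth`: the coprime factors `P / 5` and `R` of a fourth power are
fourth powers up to a common sign. -/
lemma five_mul_fourth_aux {P R y : ℤ} (hy : y ≠ 0) (hc : IsCoprime P R) (h : P * R = 5 * y ^ 4)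
    (h5 : 5 ∣ P) : ∃ c d σ : ℤ, (σ = 1 ∨ σ = -1) ∧ y = c * d ∧ IsCoprime c d ∧
      P = σ * (5 * c ^ 4) ∧ R = σ * d ^ 4 := by
  obtain ⟨P', rfl⟩ := h5
  have h' : P' * R = y ^ 4 := by linarith
  have hc' : IsCoprime P' R := hc.of_mul_left_right
  obtain ⟨c, hcc⟩ := exists_associated_pow_of_mul_eq_pow' hc' h'
  obtain ⟨d, hd⟩ := exists_associated_pow_of_mul_eq_pow' hc'.symm (by rw [mul_comm]; exact h')
  have hcd : IsCoprime c d := by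
    rw [← IsCoprime.pow_iff (m := 4) (n := 4) (by norm_num) (by norm_num)]
    exact (hc'.of_isCoprime_of_dvd_left hcc.dvd).of_isCoprime_of_dvd_right hd.dvd
  rw [Int.associated_iff] at hcc hd
  have hy4 : 0 < y ^ 4 := by positivity
  have key : ∃ σ : ℤ, (σ = 1 ∨ σ = -1) ∧ P' = σ * c ^ 4 ∧ R = σ * d ^ 4 ∧ (c * d) ^ 4 = y ^ 4 := by
    have hc4 : 0 ≤ c ^ 4 := by positivity
    have hd4 : 0 ≤ d ^ 4 := by positivity
    rcases hcc with h1 | h1 <;> rcases hd with h2 | h2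
    · exact ⟨1, Or.inl rfl, by linarith, by linarith, by rw [← h', mul_pow, h1, h2]⟩
    · nlinarith
    · nlinarith
    · exact ⟨-1, Or.inr rfl, by linarith, by linarith, by rw [← h', mul_pow, h1, h2]; ring⟩
  obtain ⟨σ, hσ, hP, hR, hcy⟩ := key
  have : c * d = y ∨ c * d = -y := by
    rcases (pow_eq_pow_iff_cases (n := 4)).1 hcy with h | h | h
    · omega
    · exact Or.inl h
    · exact Or.inr h.1
  rcases this with h | h
  · exact ⟨c, d, σ, hσ, h.symm, hcd, by rw [hP]; ring, hR⟩
  · exact ⟨-c, d, σ, hσ, by linarith, hcd.neg_left, by rw [hP]; ring, hR⟩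

/-- Coprime `P, R` with product `5 y ^ 4` are, in some order and up to a common sign `σ`, of the form
`5 c ^ 4` and `d ^ 4`. -/
lemma five_mul_fourth {P R y : ℤ} (hy : y ≠ 0) (hc : IsCoprime P R) (h : P * R = 5 * y ^ 4) :
    ∃ c d σ : ℤ, (σ = 1 ∨ σ = -1) ∧ y = c * d ∧ IsCoprime c d ∧
      (P + R = σ * (5 * c ^ 4 + d ^ 4)) ∧
      (R - P = d ^ 4 - 5 * c ^ 4 ∨ R - P = -(d ^ 4 - 5 * c ^ 4)) := by
  have h5 : Prime (5 : ℤ) := by norm_num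
  rcases h5.dvd_or_dvd (Dvd.intro _ h.symm) with h5 | h5
  · obtain ⟨c, d, σ, hσ, h1, h2, rfl, rfl⟩ := five_mul_fourth_aux hy hc h h5
    exact ⟨c, d, σ, hσ, h1, h2, by ring, by rcases hσ with rfl | rfl <;> [left; right] <;> ring⟩
  · obtain ⟨c, d, σ, hσ, h1, h2, rfl, rfl⟩ := five_mul_fourth_aux hy hc.symm (by linarith) h5
    exact ⟨c, d, σ, hσ, h1, h2, by ring, by rcases hσ with rfl | rfl <;> [right; left] <;> ring⟩

/-- Factor `(x ^ 2 + 5 y ^ 2) ^ 2 - z ^ 2 = 20 y ^ 4`. The sign in `five_mul_fourth` is positive by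
positivity of `x ^ 2 + 5 y ^ 2`. -/
lemma first_halving {x y z : ℤ} (hy0 : y ≠ 0) (h : x ^ 4 + 10 * x ^ 2 * y ^ 2 + 5 * y ^ 4 = z ^ 2)
    (hc : IsCoprime x y) (hy : 30 ∣ y) :
    ∃ c d : ℤ, y = c * d ∧ IsCoprime c d ∧ 15 ∣ c ∧
      x ^ 2 = d ^ 4 - 5 * c ^ 2 * d ^ 2 + 5 * c ^ 4 := by
  have hy2 : 2 ∣ y := Dvd.dvd.trans (by norm_num) hy
  have hy3 : ((3 : ℕ) : ℤ) ∣ y := Dvd.dvd.trans (by norm_num) hy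
  have hy5 : ((5 : ℕ) : ℤ) ∣ y := Dvd.dvd.trans (by norm_num) hy
  have hxo : Odd x := by
    rw [← Int.isCoprime_two_right]
    exact hc.of_isCoprime_of_dvd_right hy2
  have hye : Even y := even_iff_two_dvd.2 hy2
  have hzo : Odd z := by
    have : Odd (z ^ 2) := by
      rw [← h]
      simp [parity_simps, hye, hxo]
    exact (Int.odd_pow' (by norm_num)).1 this
  obtain ⟨P, hP⟩ : 2 ∣ x ^ 2 + 5 * y ^ 2 - z := by
    rw [← even_iff_two_dvd]
    simp [parity_simps, hye, Int.not_even_iff_odd.2 hxo, Int.not_even_iff_odd.2 hzo]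
  have hPR : P * (P + z) = 5 * y ^ 4 := by
    have : (2 * P) * (2 * P + 2 * z) = 20 * y ^ 4 := by
      rw [← hP]; linear_combination h
    linarith
  have hcop : IsCoprime P (P + z) := by
    refine coprime_of_prime ?_ fun p hp h1 h2 => ?_
    · rintro rfl
      simp [hy0] at hPR
    have hpy : p ∣ y := by
      have : p ∣ 5 * y ^ 4 := hPR ▸ h1.mul_right _
      rcases hp.dvd_or_dvd this with h | h
      · exact h.trans hy5
      · exact hp.dvd_of_dvd_pow h
    have hpx : p ∣ x ^ 2 := by
      have : x ^ 2 = P + (P + z) - 5 * y * y := by linarith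
      rw [this]
      exact dvd_sub (dvd_add h1 h2) (hpy.mul_left _)
    exact not_prime_dvd hc hp (hp.dvd_of_dvd_pow hpx) hpy
  obtain ⟨c, d, σ, hσ, hycd, hcd, hs, -⟩ := five_mul_fourth hy0 hcop hPR
  have hpos : 0 < y ^ 2 := by positivity
  have hσ1 : σ = 1 := by
    rcases hσ with h | rfl
    · exact h
    · have : 0 ≤ c ^ 4 := by positivity
      have : 0 ≤ d ^ 4 := by positivity
      nlinarith [sq_nonneg x]
  subst hσ1
  have hx : x ^ 2 = d ^ 4 - 5 * c ^ 2 * d ^ 2 + 5 * c ^ 4 := by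
    rw [hycd] at hP
    linear_combination hs + hP
  refine ⟨c, d, hycd, hcd, ?_, hx⟩
  -- If `3 ∣ d` and `3 ∤ c`, the right-hand side of `hx` is `2` modulo `3`.
  have h3 : (3 : ℤ) ∣ c := by
    have e := congrArg (Int.cast : ℤ → ZMod 3) hx
    have e2 := congrArg (Int.cast : ℤ → ZMod 3) hycd
    rw [cast_eq_zero_of_dvd 3 hy3] at e2
    refine (ZMod.intCast_zmod_eq_zero_iff_dvd c 3).1 ?_
    push_cast at e e2
    generalize (x : ZMod 3) = x at *
    generalize (c : ZMod 3) = c at *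
    generalize (d : ZMod 3) = d at *
    clear * - e e2
    revert x c d; decide
  -- If `5 ∣ d`, then `hx` gives `5 ∣ x`, contrary to `5 ∣ y`.
  have h5 : (5 : ℤ) ∣ c := by
    have e := congrArg (Int.cast : ℤ → ZMod 5) hx
    have e2 := congrArg (Int.cast : ℤ → ZMod 5) hycd
    have e3 := cast_ne_zero_of_coprime (n := 5) (by norm_num) hc.symm (cast_eq_zero_of_dvd 5 hy5)
    rw [cast_eq_zero_of_dvd 5 hy5] at e2
    refine (ZMod.intCast_zmod_eq_zero_iff_dvd c 5).1 ?_
    push_cast at e e2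
    generalize (x : ZMod 5) = x at *
    generalize (c : ZMod 5) = c at *
    generalize (d : ZMod 5) = d at *
    clear * - e e2 e3
    revert x c d; decide
  omega


lemma odd_sq {p : ℤ} (h : Odd p) : ∃ m, p ^ 2 = 8 * m + 1 := by
  obtain ⟨m, hm⟩ := Int.eight_dvd_sq_sub_one_of_odd h
  exact ⟨m, by linarith⟩

lemma odd_fourth {p : ℤ} (h : Odd p) : ∃ m, p ^ 4 = 16 * m + 1 := by
  obtain ⟨m, hm⟩ := odd_sq h
  exact ⟨4 * m ^ 2 + m, by rw [show p ^ 4 = (p ^ 2) ^ 2 by ring, hm]; ring⟩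

lemma not_three_dvd_sq {p : ℤ} (h : ¬ 3 ∣ p) : ∃ m, p ^ 2 = 3 * m + 1 := by
  obtain ⟨k, rfl | rfl | rfl⟩ : ∃ k, p = 3 * k ∨ p = 3 * k + 1 ∨ p = 3 * k + 2 :=
    ⟨p / 3, by omega⟩
  · simp at h
  · exact ⟨3 * k ^ 2 + 2 * k, by ring⟩
  · exact ⟨3 * k ^ 2 + 4 * k + 1, by ring⟩

/-- For `d` even, factor `(2 d ^ 2 - 5 c ^ 2) ^ 2 - (2 x) ^ 2 = 5 c ^ 4`. With `c = q p` one gets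
`4 x = ± (p ^ 4 - 5 q ^ 4)` with `p, q` odd, `3 ∣ q` and `3 ∤ p`, so that `x` has opposite signs
modulo `3` and modulo `4`. -/
lemma second_halving_even {x c d : ℤ} (hc0 : c ≠ 0) (hcd : IsCoprime c d) (h15 : 15 ∣ c)
    (hd : Even d) (h : x ^ 2 = d ^ 4 - 5 * c ^ 2 * d ^ 2 + 5 * c ^ 4) :
    ¬ (x % 12 = 1 ∨ x % 12 = 11) := by
  have hco : Odd c := by
    rw [← Int.isCoprime_two_right]
    exact hcd.of_isCoprime_of_dvd_right (even_iff_two_dvd.1 hd)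
  have hmul : (2 * d ^ 2 - 5 * c ^ 2 - 2 * x) * (2 * d ^ 2 - 5 * c ^ 2 + 2 * x) = 5 * c ^ 4 := by
    linear_combination (-4) * h
  have hcop : IsCoprime (2 * d ^ 2 - 5 * c ^ 2 - 2 * x) (2 * d ^ 2 - 5 * c ^ 2 + 2 * x) := by
    refine coprime_of_prime ?_ fun p hp h1 h2 => ?_
    · intro h0
      simp [h0, hc0] at hmul
    have hpc : p ∣ c := by
      have : p ∣ 5 * c ^ 4 := hmul ▸ h1.mul_right _
      rcases hp.dvd_or_dvd this with h | h
      · exact h.trans (Dvd.dvd.trans (by norm_num) h15)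
      · exact hp.dvd_of_dvd_pow h
    have hpd : p ∣ (2 * d) ^ 2 := by
      have : (2 * d) ^ 2 = (2 * d ^ 2 - 5 * c ^ 2 - 2 * x) + (2 * d ^ 2 - 5 * c ^ 2 + 2 * x)
        + 10 * c * c := by ring
      rw [this]
      exact dvd_add (dvd_add h1 h2) (hpc.mul_left _)
    rcases hp.dvd_or_dvd (hp.dvd_of_dvd_pow hpd) with h | h
    · have := Int.isCoprime_two_right.2 hco
      exact not_prime_dvd this hp hpc h
    · exact not_prime_dvd hcd hp hpc h
  obtain ⟨q, p, σ, hσ, hqp, hqpc, hs, hdiff⟩ := five_mul_fourth hc0 hcop hmul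
  have hpo : Odd p := (Int.odd_mul.1 (hqp ▸ hco)).2
  have hqo : Odd q := (Int.odd_mul.1 (hqp ▸ hco)).1
  obtain ⟨p', hp'⟩ := odd_fourth hpo
  obtain ⟨q', hq'⟩ := odd_fourth hqo
  obtain ⟨c', hc'⟩ := odd_sq hco
  obtain ⟨e, rfl⟩ := even_iff_two_dvd.1 hd
  have hs' : 16 * e ^ 2 - 10 * c ^ 2 = σ * (5 * q ^ 4 + p ^ 4) := by linear_combination hs
  rcases hσ with rfl | rfl
  swap
  -- The sign `-1` is impossible modulo `16`.
  · omega
  have h3c : (3 : ℤ) ∣ c := Dvd.dvd.trans (by norm_num) h15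
  have h3d : ¬ (3 : ℤ) ∣ e := fun h =>
    not_prime_dvd hcd (by norm_num) h3c (h.mul_left _)
  obtain ⟨e', he'⟩ := not_three_dvd_sq h3d
  have h3q : (3 : ℤ) ∣ q := by
    by_contra h3q
    obtain ⟨m, hm⟩ := not_three_dvd_sq h3q
    have h3p : (3 : ℤ) ∣ p := by
      rw [hqp] at h3c
      exact (Int.prime_three.dvd_or_dvd h3c).resolve_left h3q
    obtain ⟨k, rfl⟩ := h3p
    obtain ⟨l, rfl⟩ := h3c
    have : q ^ 4 = 9 * m ^ 2 + 6 * m + 1 := by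
      rw [show q ^ 4 = (q ^ 2) ^ 2 by ring, hm]; ring
    ring_nf at hs' this he'
    omega
  have h3p : ¬ (3 : ℤ) ∣ p := fun h => not_prime_dvd hqpc Int.prime_three h3q h
  obtain ⟨m, hm⟩ := not_three_dvd_sq h3p
  have hp3 : p ^ 4 = 3 * (3 * m ^ 2 + 2 * m) + 1 := by
    rw [show p ^ 4 = (p ^ 2) ^ 2 by ring, hm]; ring
  obtain ⟨k, hk⟩ := dvd_pow h3q (n := 4) (by norm_num)
  generalize 3 * m ^ 2 + 2 * m = M at *
  omega

/-- For `d` odd, factor `(d ^ 2 - 10 c0 ^ 2) ^ 2 - x ^ 2 = 20 c0 ^ 4` with `c = 2 c0`, which leads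
back to the original quartic. -/
lemma second_halving_odd {x c d : ℤ} (hc0 : c ≠ 0) (hcd : IsCoprime c d) (h15 : 15 ∣ c)
    (hc : Even c) (h : x ^ 2 = d ^ 4 - 5 * c ^ 2 * d ^ 2 + 5 * c ^ 4) :
    ∃ p q, c = 2 * p * q ∧ IsCoprime p q ∧ 30 ∣ q ∧ Odd p ∧ ¬ 3 ∣ p ∧
      p ^ 4 + 10 * p ^ 2 * q ^ 2 + 5 * q ^ 4 = d ^ 2 := by
  have hdo : Odd d := by
    rw [← Int.isCoprime_two_left]
    exact hcd.of_isCoprime_of_dvd_left (even_iff_two_dvd.1 hc)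
  obtain ⟨c0, rfl⟩ := even_iff_two_dvd.1 hc
  have h15' : 15 ∣ c0 := by omega
  have hxo : Odd x := by
    have : Odd (x ^ 2) := by
      rw [h]
      simp [parity_simps, hdo]
    exact (Int.odd_pow' (by norm_num)).1 this
  obtain ⟨P, hP⟩ : 2 ∣ d ^ 2 - 10 * c0 ^ 2 - x := by
    rw [← even_iff_two_dvd]
    simp [parity_simps, Int.not_even_iff_odd.2 hdo, Int.not_even_iff_odd.2 hxo,
      show ¬ Odd (10 : ℤ) by decide]
  have hc00 : c0 ≠ 0 := by rintro rfl; simp at hc0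
  have hcd0 : IsCoprime c0 d := hcd.of_mul_left_right
  have hmul : P * (P + x) = 5 * c0 ^ 4 := by
    have : (2 * P) * (2 * P + 2 * x) = 20 * c0 ^ 4 := by
      rw [← hP]; linear_combination -h
    linarith
  have hcop : IsCoprime P (P + x) := by
    refine coprime_of_prime ?_ fun p hp h1 h2 => ?_
    · rintro rfl
      simp [hc00] at hmul
    have hpc : p ∣ c0 := by
      have : p ∣ 5 * c0 ^ 4 := hmul ▸ h1.mul_right _
      rcases hp.dvd_or_dvd this with h | h
      · exact h.trans (Dvd.dvd.trans (by norm_num) h15')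
      · exact hp.dvd_of_dvd_pow h
    have hpd : p ∣ d ^ 2 := by
      have : d ^ 2 = P + (P + x) + 10 * c0 * c0 := by linarith
      rw [this]
      exact dvd_add (dvd_add h1 h2) (hpc.mul_left _)
    exact not_prime_dvd hcd0 hp hpc (hp.dvd_of_dvd_pow hpd)
  obtain ⟨q, p, σ, hσ, hqp, hqpc, hs, -⟩ := five_mul_fourth hc00 hcop hmul
  have hs' : d ^ 2 - 10 * (q * p) ^ 2 = σ * (5 * q ^ 4 + p ^ 4) := by
    rw [← hqp]; linear_combination hs + hP
  obtain ⟨d', hd'⟩ := odd_sq hdo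
  rcases hσ with rfl | rfl
  swap
  -- The sign `-1` is impossible modulo `4`.
  · exfalso
    rw [hd'] at hs'
    have e := congrArg (Int.cast : ℤ → ZMod 4) hs'
    push_cast at e
    rw [show (8 : ZMod 4) = 0 by decide] at e
    generalize (p : ZMod 4) = p at *
    generalize (q : ZMod 4) = q at *
    generalize (d' : ZMod 4) = d' at *
    clear * - e
    revert p q d'; decide
  have hG : p ^ 4 + 10 * p ^ 2 * q ^ 2 + 5 * q ^ 4 = d ^ 2 := by linear_combination -hs'
  have h2 : 2 ∣ q ∧ Odd p := by
    rw [hd'] at hG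
    have hpe : Even p ∨ Odd p := Int.even_or_odd p
    rcases Int.even_or_odd q with hq | hq
    · refine ⟨even_iff_two_dvd.1 hq, ?_⟩
      by_contra hp
      have hp := even_iff_two_dvd.1 (Int.not_odd_iff_even.1 hp)
      exact not_prime_dvd hqpc Int.prime_two (even_iff_two_dvd.1 hq) hp
    · exfalso
      obtain ⟨m, hm⟩ := odd_sq hq
      rw [show q ^ 4 = (q ^ 2) ^ 2 by ring, hm] at hG
      rcases hpe with ⟨k, rfl⟩ | hp
      · ring_nf at hG; omega
      · obtain ⟨n, hn⟩ := odd_sq hp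
        rw [show p ^ 4 = (p ^ 2) ^ 2 by ring, hn] at hG
        ring_nf at hG; omega
  have h3 : 3 ∣ q ∧ ¬ 3 ∣ p := by
    have h3c : ((3 : ℕ) : ℤ) ∣ c0 := Dvd.dvd.trans (by norm_num) h15'
    have e := congrArg (Int.cast : ℤ → ZMod 3) hG
    have e2 := congrArg (Int.cast : ℤ → ZMod 3) hqp
    have e3 := cast_ne_zero_of_coprime (n := 3) (by norm_num) hcd0 (cast_eq_zero_of_dvd 3 h3c)
    rw [cast_eq_zero_of_dvd 3 h3c] at e2
    have hq : 3 ∣ q := by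
      refine (ZMod.intCast_zmod_eq_zero_iff_dvd q 3).1 ?_
      push_cast at e e2
      generalize (p : ZMod 3) = p at *
      generalize (q : ZMod 3) = q at *
      generalize (d : ZMod 3) = d at *
      clear * - e e2 e3
      revert p q d; decide
    exact ⟨hq, fun h => not_prime_dvd hqpc Int.prime_three hq h⟩
  have h5 : 5 ∣ q := by
    have h5c : ((5 : ℕ) : ℤ) ∣ c0 := Dvd.dvd.trans (by norm_num) h15'
    have e := congrArg (Int.cast : ℤ → ZMod 5) hG
    have e2 := congrArg (Int.cast : ℤ → ZMod 5) hqp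
    have e3 := cast_ne_zero_of_coprime (n := 5) (by norm_num) hcd0 (cast_eq_zero_of_dvd 5 h5c)
    rw [cast_eq_zero_of_dvd 5 h5c] at e2
    refine (ZMod.intCast_zmod_eq_zero_iff_dvd q 5).1 ?_
    push_cast at e e2
    generalize (p : ZMod 5) = p at *
    generalize (q : ZMod 5) = q at *
    generalize (d : ZMod 5) = d at *
    clear * - e e2 e3
    revert p q d; decide
  exact ⟨p, q, by rw [hqp]; ring, hqpc.symm, by omega, h2.2, h3.2, hG⟩

/-- Infinite descent on `|y|`. Hypothesis `hI` serves to carry the condition on `x` over to the smaller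
solution `(p, q, d)`, where `y = 2 p q d`: it is inherited by the divisor `q` of `y`, and gives
`p ≡ ± 1` modulo `12`. -/
lemma no_quartic_solution (x y z : ℤ) (hy : y ≠ 0)
    (h : x ^ 4 + 10 * x ^ 2 * y ^ 2 + 5 * y ^ 4 = z ^ 2) (hc : IsCoprime x y) (h30 : 30 ∣ y)
    (hx : x % 12 = 1 ∨ x % 12 = 11)
    (hI : ∀ p m, y = p * m → IsCoprime p (6 * m) → p % 12 = 1 ∨ p % 12 = 11) : False := by
  induction hn : y.natAbs using Nat.strong_induction_on generalizing x y z with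
  | _ n ih =>
  obtain ⟨c, d, rfl, hcd, h15, hxd⟩ := first_halving hy h hc h30
  have hc0 : c ≠ 0 := left_ne_zero_of_mul hy
  rcases Int.even_or_odd d with hd | hd
  · exact second_halving_even hc0 hcd h15 hd hxd hx
  have hce : Even c := by
    have : Even (c * d) := even_iff_two_dvd.2 (Dvd.dvd.trans (by norm_num) h30)
    exact (Int.even_mul.1 this).resolve_right (Int.not_even_iff_odd.2 hd)
  obtain ⟨p, q, rfl, hpq, h30q, hpo, hp3, hG⟩ := second_halving_odd hc0 hcd h15 hce hxd
  have hq0 : q ≠ 0 := right_ne_zero_of_mul hc0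
  have hp0 : p ≠ 0 := right_ne_zero_of_mul (left_ne_zero_of_mul hc0)
  have hd0 : d ≠ 0 := right_ne_zero_of_mul hy
  have hpd : IsCoprime p d := hcd.of_mul_left_left.of_mul_left_right
  have hp6 : IsCoprime p 6 := by
    have h2 : IsCoprime p 2 := Int.isCoprime_two_right.2 hpo
    have h3 : IsCoprime p 3 := ((Int.prime_three.coprime_iff_not_dvd).2 hp3).symm
    exact h2.mul_right h3
  refine ih _ ?_ p q d hq0 hG hpq h30q ?_ ?_ rfl
  · rw [← hn]
    simp only [Int.natAbs_mul]
    have h1 : 0 < p.natAbs := Int.natAbs_pos.2 hp0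
    have h2 : 0 < q.natAbs := Int.natAbs_pos.2 hq0
    have h3 : 0 < d.natAbs := Int.natAbs_pos.2 hd0
    have : 1 * q.natAbs * 1 < (2 * p.natAbs) * q.natAbs * d.natAbs := by
      have h4 : 1 * q.natAbs < (2 * p.natAbs) * q.natAbs := by
        apply Nat.mul_lt_mul_of_pos_right _ h2
        omega
      calc _ < (2 * p.natAbs) * q.natAbs * 1 := by omega
        _ ≤ _ := Nat.mul_le_mul_left _ h3
    simpa using this
  · refine hI p (2 * q * d) (by ring) ?_
    exact hp6.mul_right (((Int.isCoprime_two_right.2 hpo).mul_right hpq).mul_right hpd)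
  · rintro p' m rfl hp'
    have h6 := hp'.of_mul_right_left
    have hm := hp'.of_mul_right_right
    refine hI p' (m * (2 * p * d)) (by ring) (h6.mul_right (hm.mul_right ?_))
    have h2 : IsCoprime p' 2 := h6.of_isCoprime_of_dvd_right (by norm_num)
    have hpp : IsCoprime p' p := (hpq.of_mul_right_left).symm
    have hpd' : IsCoprime p' d := (hcd.of_mul_left_right).of_mul_left_left
    exact (h2.mul_right hpp).mul_right hpd'

/-! ### Reduction to the quartic -/

/-- In lowest terms `X = n / q`, the number `q (n ^ 5 - 2187 q ^ 5)` is the square of `Y q ^ 3` and its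
factors are coprime, so `q` is a square. -/
lemma exists_int_solution {X Y : ℚ} (h : Y ^ 2 = X ^ 5 - 2187) :
    ∃ A B e : ℤ, e ≠ 0 ∧ IsCoprime A e ∧ B ^ 2 + 2187 * e ^ 10 = A ^ 5 := by
  have hq0 : (0 : ℤ) < X.den := by exact_mod_cast X.den_pos
  have hcop := Rat.isCoprime_num_den X
  have hX : X = (X.num : ℚ) / ((X.den : ℤ) : ℚ) := by
    exact_mod_cast (Rat.num_div_den X).symm
  generalize X.num = n at *
  generalize (X.den : ℤ) = q at *
  have hqQ : (q : ℚ) ≠ 0 := by exact_mod_cast hq0.ne'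
  obtain ⟨c, hcc⟩ : IsSquare (q * (n ^ 5 - 2187 * q ^ 5)) := by
    rw [← Rat.isSquare_intCast_iff]
    refine ⟨Y * q ^ 3, ?_⟩
    rw [show Y * (q : ℚ) ^ 3 * (Y * q ^ 3) = Y ^ 2 * q ^ 6 by ring, h, hX]
    push_cast
    field_simp
  have hcop' : IsCoprime q (n ^ 5 - 2187 * q ^ 5) := by
    rw [show n ^ 5 - 2187 * q ^ 5 = n ^ 5 + q * (-2187 * q ^ 4) by ring]
    exact hcop.symm.pow_right.add_mul_left_right _
  obtain ⟨e, he | he⟩ := Int.sq_of_isCoprime hcop' (hcc.trans (sq c).symm)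
  swap
  · nlinarith [sq_nonneg e]
  subst he
  have he0 : e ≠ 0 := by rintro rfl; simp at hq0
  obtain ⟨B, rfl⟩ : e ∣ c := by
    rw [← Int.pow_dvd_pow_iff (n := 2) (by norm_num), sq c, ← hcc]
    exact dvd_mul_right _ _
  refine ⟨n, B, e, he0, (IsCoprime.pow_right_iff (by norm_num)).1 hcop, ?_⟩
  have : e ^ 2 * (n ^ 5 - 2187 * (e ^ 2) ^ 5) = e ^ 2 * B ^ 2 := by rw [hcc]; ring
  have := mul_left_cancel₀ (pow_ne_zero 2 he0) this
  linear_combination -this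

lemma not_three_dvd_of_solution {A B e : ℤ} (hc : IsCoprime A e)
    (h : B ^ 2 + 2187 * e ^ 10 = A ^ 5) : ¬ 3 ∣ A := by
  have h3 := Int.prime_three
  -- Divide by the powers of `3` one at a time until `3 ∣ e` appears.
  intro hA
  have he : ¬ 3 ∣ e := fun h => not_prime_dvd hc h3 hA h
  obtain ⟨a, rfl⟩ := hA
  obtain ⟨b, rfl⟩ : 3 ∣ B := h3.dvd_of_dvd_pow (n := 2) (by ring_nf at h; omega)
  obtain ⟨b, rfl⟩ : 3 ∣ b := h3.dvd_of_dvd_pow (n := 2) (by ring_nf at h; omega)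
  obtain ⟨b, rfl⟩ : 3 ∣ b := h3.dvd_of_dvd_pow (n := 2) (by ring_nf at h; omega)
  obtain ⟨a, rfl⟩ : 3 ∣ a := h3.dvd_of_dvd_pow (n := 5) (by ring_nf at h; omega)
  obtain ⟨b, rfl⟩ : 3 ∣ b := h3.dvd_of_dvd_pow (n := 2) (by ring_nf at h; omega)
  exact he (h3.dvd_of_dvd_pow (n := 10) (by ring_nf at h; omega))

lemma odd_of_solution {A B e : ℤ} (hc : IsCoprime A e)
    (h : B ^ 2 + 2187 * e ^ 10 = A ^ 5) : Odd A := by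
  by_contra hA
  obtain ⟨a, rfl⟩ := even_iff_two_dvd.1 (Int.not_odd_iff_even.1 hA)
  have he : Odd e := by
    rw [← Int.isCoprime_two_left]
    exact hc.of_mul_left_left
  obtain ⟨m, hm⟩ := odd_sq he
  rw [show e ^ 10 = (e ^ 2) ^ 5 by ring, hm] at h
  have e := congrArg (Int.cast : ℤ → ZMod 8) h
  push_cast at e
  rw [mul_pow, show (8 : ZMod 8) = 0 by decide, show (2 : ZMod 8) ^ 5 = 0 by decide] at e
  simp only [zero_mul, zero_add, one_pow] at e
  generalize (B : ZMod 8) = B at *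
  clear * - e
  revert B; decide

lemma isCoprime_of_solution {A B e : ℤ} (hc : IsCoprime A e)
    (h : B ^ 2 + 2187 * e ^ 10 = A ^ 5) : IsCoprime (2 * B) A := by
  have h3 := not_three_dvd_of_solution hc h
  have h2 := odd_of_solution hc h
  refine (Int.isCoprime_two_left.2 h2).mul_left (IsCoprime.symm ?_)
  refine coprime_of_prime (by rintro rfl; simp at h3) fun p hp hA hB => ?_
  have : p ∣ 3 ^ 7 * e ^ 10 := by
    rw [show (3 : ℤ) ^ 7 * e ^ 10 = A ^ 4 * A - B * B by linear_combination h]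
    exact dvd_sub (hA.mul_left _) (hB.mul_left _)
  rcases hp.dvd_or_dvd this with h | h
  · exact not_prime_dvd ((Int.prime_three.coprime_iff_not_dvd).2 h3) hp (hp.dvd_of_dvd_pow h) hA
  · exact not_prime_dvd hc hp hA (hp.dvd_of_dvd_pow h)

/-- `B + 27 e ^ 5 √-3` is the fifth power of some `u + v √-3`, where `v = 27 w`. -/
lemma exists_uv {A B e : ℤ} (he : e ≠ 0) (hc : IsCoprime A e)
    (h : B ^ 2 + 2187 * e ^ 10 = A ^ 5) :
    ∃ u w : ℤ, w ≠ 0 ∧ IsCoprime u (27 * w) ∧ ¬ 3 ∣ u ∧ Odd (u ^ 2 + 3 * (27 * w) ^ 2) ∧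
      e ^ 5 = w * (5 * u ^ 4 - 30 * u ^ 2 * (27 * w) ^ 2 + 9 * (27 * w) ^ 4) := by
  have h3A := not_three_dvd_of_solution hc h
  have h2A := odd_of_solution hc h
  have hBA := isCoprime_of_solution hc h
  obtain ⟨u, v, hB, hv⟩ := QInt.pow_five_sqrt_neg_three (N := 27 * e ^ 5)
    (by linear_combination h) hBA
  have hA : u ^ 2 + 3 * v ^ 2 = A := by
    refine (Odd.strictMono_pow (R := ℤ) (n := 5) (by decide)).injective ?_
    rw [← h, hB]
    linear_combination (-3) * (27 * e ^ 5 + v * (5 * u ^ 4 - 30 * u ^ 2 * v ^ 2 + 9 * v ^ 4)) * hv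
  have hv0 : v ≠ 0 := by
    rintro rfl
    simp [he] at hv
  have huv : IsCoprime v u := by
    refine coprime_of_prime hv0 fun p hp h1 h2 => ?_
    refine not_prime_dvd hBA hp ?_ ?_ (p := p)
    · rw [hB]; exact (h2.mul_right _).mul_left _
    · rw [← hA, sq, sq]; exact dvd_add (h2.mul_left _) ((h1.mul_left _).mul_left _)
  have h3u : ¬ 3 ∣ u := by
    intro h3
    apply h3A
    rw [← hA, sq]
    exact dvd_add (h3.mul_left _) (dvd_mul_right _ _)
  have h27 : (3 : ℤ) ^ 3 ∣ v := by
    refine IsCoprime.dvd_of_dvd_mul_right (z := 5 * u ^ 4 - 30 * u ^ 2 * v ^ 2 + 9 * v ^ 4) ?_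
      ⟨e ^ 5, by rw [← hv]; norm_num⟩
    refine IsCoprime.pow_left ((Int.prime_three.coprime_iff_not_dvd).2 fun hd => h3u ?_)
    have h6 : (3 : ℤ) ∣ 5 * u ^ 4 := by
      rw [show 5 * u ^ 4 = 5 * u ^ 4 - 30 * u ^ 2 * v ^ 2 + 9 * v ^ 4
        + 3 * (10 * u ^ 2 * v ^ 2 - 3 * v ^ 4) by ring]
      exact dvd_add hd (dvd_mul_right _ _)
    exact Int.prime_three.dvd_of_dvd_pow (n := 4) (by omega)
  obtain ⟨w, rfl⟩ := h27
  norm_num at *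
  refine ⟨u, w, hv0, huv.symm, h3u, by rw [hA]; exact h2A, ?_⟩
  linarith

lemma pow_five_zmod (t : ZMod 25) : t ^ 5 = 0 ∨ t ^ 5 = 1 ∨ t ^ 5 = 7 ∨ t ^ 5 = 18 ∨ t ^ 5 = 24 := by
  revert t; decide

/-- If `5 ∤ w`, then `w` and the quartic factor are fifth powers, which is impossible modulo `25`,
because tenth powers of units are `± 1` modulo `25`. -/
lemma five_dvd_of_uv {u w e : ℤ} (hc : IsCoprime u (27 * w))
    (h : e ^ 5 = w * (5 * u ^ 4 - 30 * u ^ 2 * (27 * w) ^ 2 + 9 * (27 * w) ^ 4)) : 5 ∣ w := by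
  by_contra h5
  have huw : IsCoprime u w := hc.of_mul_right_right
  have hcop : IsCoprime w (5 * u ^ 4 - 30 * u ^ 2 * (27 * w) ^ 2 + 9 * (27 * w) ^ 4) := by
    have h5w : IsCoprime w 5 :=
      (((by norm_num : Prime (5 : ℤ)).coprime_iff_not_dvd).2 h5).symm
    rw [show 5 * u ^ 4 - 30 * u ^ 2 * (27 * w) ^ 2 + 9 * (27 * w) ^ 4 = 5 * u ^ 4
      + w * (-30 * u ^ 2 * 27 ^ 2 * w + 9 * 27 ^ 4 * w ^ 3) by ring]
    exact (h5w.mul_right huw.symm.pow_right).add_mul_left_right _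
  obtain ⟨⟨s, hs⟩, t, ht⟩ := Int.eq_pow_of_mul_eq_pow_odd hcop (by decide : Odd 5) h.symm
  have hs5 : ¬ ((5 : ℕ) : ℤ) ∣ s := fun hh => h5 (hs ▸ hh.trans (dvd_pow_self s (by norm_num)))
  rw [← ZMod.intCast_zmod_eq_zero_iff_dvd] at hs5
  have hS : ((w : ℤ) : ZMod 25) ^ 2 = 1 ∨ ((w : ℤ) : ZMod 25) ^ 2 = -1 := by
    have key : ∀ s : ZMod 25, ZMod.castHom (by norm_num : 5 ∣ 25) (ZMod 5) s ≠ 0 →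
      (s ^ 5) ^ 2 = 1 ∨ (s ^ 5) ^ 2 = -1 := by decide
    have := key s (by simpa using hs5)
    rw [hs]; push_cast; exact this
  have e := congrArg (Int.cast : ℤ → ZMod 25) ht
  have hT := pow_five_zmod t
  push_cast at e
  rw [← e, mul_pow 27, mul_pow 27, show (w : ZMod 25) ^ 4 = ((w : ZMod 25) ^ 2) ^ 2 by ring] at hT
  generalize (w : ZMod 25) ^ 2 = S at *
  generalize (u : ZMod 25) = u at *
  clear * - hT hS
  rcases hS with rfl | rfl <;> revert u <;> decide

/-- With `w = 625 k`, the quartic factor divided by `5` is a fifth power and equals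
`W ^ 2 - 5 N ^ 2` for `W = u ^ 2 - 3 v ^ 2` and `N = 6 v ^ 2 / 5`, where `v = 27 w = 16875 k`. -/
lemma exists_WNt {u w e : ℤ} (he : e ≠ 0) (hc : IsCoprime u (27 * w)) (h5 : 5 ∣ w)
    (h : e ^ 5 = w * (5 * u ^ 4 - 30 * u ^ 2 * (27 * w) ^ 2 + 9 * (27 * w) ^ 4)) :
    ∃ k t : ℤ, k ≠ 0 ∧ w = 625 * k ∧ ¬ 5 ∣ u ∧
      (u ^ 2 - 3 * (16875 * k) ^ 2) ^ 2 - 5 * (341718750 * k ^ 2) ^ 2 = t ^ 5 := by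
  have hp5 : Prime (5 : ℤ) := by norm_num
  have huw : IsCoprime u w := hc.of_mul_right_right
  have h5u : ¬ 5 ∣ u := fun hh => not_prime_dvd huw hp5 hh h5
  obtain ⟨e, rfl⟩ : 5 ∣ e := hp5.dvd_of_dvd_pow (n := 5) (h ▸ h5.mul_right _)
  obtain ⟨w1, rfl⟩ := h5
  have h' : 125 * e ^ 5 = w1 * (u ^ 4 - 6 * u ^ 2 * (135 * w1) ^ 2 + 5 * 9 * (27 * w1) ^ 2 *
    (135 * w1) ^ 2) := by linarith
  have h5Q : IsCoprime 5 (u ^ 4 - 6 * u ^ 2 * (135 * w1) ^ 2 + 5 * 9 * (27 * w1) ^ 2 *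
      (135 * w1) ^ 2) := by
    rw [show u ^ 4 - 6 * u ^ 2 * (135 * w1) ^ 2 + 5 * 9 * (27 * w1) ^ 2 * (135 * w1) ^ 2 = u ^ 4
      + 5 * (- 6 * u ^ 2 * 27 * 135 * w1 ^ 2 + 9 * (27 * w1) ^ 2 * (135 * w1) ^ 2) by ring]
    exact ((hp5.coprime_iff_not_dvd).2 h5u).pow_right.add_mul_left_right _
  have h625 : (5 : ℤ) ^ 3 ∣ w1 :=
    IsCoprime.dvd_of_dvd_mul_right h5Q.pow_left ⟨e ^ 5, by rw [← h']; norm_num⟩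
  obtain ⟨k, rfl⟩ := h625
  have h'' : k * (u ^ 4 - 6 * u ^ 2 * (135 * (5 ^ 3 * k)) ^ 2 + 5 * 9 * (27 * (5 ^ 3 * k)) ^ 2 *
      (135 * (5 ^ 3 * k)) ^ 2) = e ^ 5 := by linarith
  have hku : IsCoprime k u := (huw.of_mul_right_right.of_mul_right_right).symm
  have hkQ : IsCoprime k (u ^ 4 - 6 * u ^ 2 * (135 * (5 ^ 3 * k)) ^ 2
      + 5 * 9 * (27 * (5 ^ 3 * k)) ^ 2 * (135 * (5 ^ 3 * k)) ^ 2) := by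
    rw [show u ^ 4 - 6 * u ^ 2 * (135 * (5 ^ 3 * k)) ^ 2 + 5 * 9 * (27 * (5 ^ 3 * k)) ^ 2 *
      (135 * (5 ^ 3 * k)) ^ 2 = u ^ 4 + k * (- 6 * u ^ 2 * (135 * 5 ^ 3) ^ 2 * k
        + 5 * 9 * (27 * 5 ^ 3) ^ 2 * (135 * 5 ^ 3) ^ 2 * k ^ 3) by ring]
    exact hku.pow_right.add_mul_left_right _
  obtain ⟨-, t, ht⟩ := Int.eq_pow_of_mul_eq_pow_odd hkQ (by decide : Odd 5) h''
  refine ⟨k, t, ?_, by ring, h5u, ?_⟩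
  · rintro rfl
    simp only [zero_mul] at h''
    exact he (by rw [pow_eq_zero_iff (by norm_num) |>.1 h''.symm, mul_zero])
  · rw [← ht]; ring

lemma emod_twelve_of_sq {r : ℤ} (h : IsCoprime r 6) : r ^ 2 % 12 = 1 := by
  have h2 : IsCoprime r 2 := h.of_isCoprime_of_dvd_right (by norm_num)
  have h3 : IsCoprime 3 r := (h.of_isCoprime_of_dvd_right (by norm_num)).symm
  obtain ⟨m, hm⟩ := odd_sq (Int.isCoprime_two_right.1 h2)
  obtain ⟨n, hn⟩ := not_three_dvd_sq ((Int.prime_three.coprime_iff_not_dvd).1 h3)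
  omega

/-- Taking the fifth root `x + y √5` of `W + N √5` gives a square value
`x ^ 4 + 10 x ^ 2 y ^ 2 + 5 y ^ 4`, where `y = 68343750 a ^ 2` and `68343750 = 2 * 3 ^ 7 * 5 ^ 6`, to
which `no_quartic_solution` applies. -/
lemma no_WNt {u k t : ℤ} (hk : k ≠ 0) (huk : IsCoprime u (16875 * k)) (h3u : ¬ 3 ∣ u)
    (h5u : ¬ 5 ∣ u) (hodd : Odd (u ^ 2 + 3 * (16875 * k) ^ 2))
    (h : (u ^ 2 - 3 * (16875 * k) ^ 2) ^ 2 - 5 * (341718750 * k ^ 2) ^ 2 = t ^ 5) : False := by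
  obtain ⟨W, hW⟩ : ∃ W, W = u ^ 2 - 3 * (16875 * k) ^ 2 := ⟨_, rfl⟩
  have hp5 : Prime (5 : ℤ) := by norm_num
  have hp3 := Int.prime_three
  have hp2 := Int.prime_two
  rw [← hW] at h
  have hWo : Odd W := by
    rw [hW, show u ^ 2 - 3 * (16875 * k) ^ 2 = u ^ 2 + 3 * (16875 * k) ^ 2
      - 2 * (3 * (16875 * k) ^ 2) by ring]
    exact hodd.sub_even (even_two_mul _)
  have hW3 : ¬ 3 ∣ W := fun hd => h3u <| hp3.dvd_of_dvd_pow (n := 2) <| by omega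
  have hW5 : ¬ 5 ∣ W := fun hd => h5u <| hp5.dvd_of_dvd_pow (n := 2) <| by
    rw [show u ^ 2 = W + 5 * (3 * 16875 * 3375 * k ^ 2) by rw [hW]; ring]
    exact dvd_add hd (dvd_mul_right _ _)
  have hto : Odd t := by
    have : Odd (t ^ 5) := by
      rw [← h]
      simp [parity_simps, hWo, show Even (341718750 : ℤ) by decide]
    exact (Int.odd_pow' (by norm_num)).1 this
  have hW0 : W ≠ 0 := by rintro rfl; simp at hW3
  have hWt : IsCoprime W t := by
    refine coprime_of_prime hW0 fun p hp h1 h2 => ?_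
    have h36 : p ∣ (2 * 3) ^ 2 * (16875 * k) ^ 4 := by
      rw [show (2 * 3) ^ 2 * (16875 * k) ^ 4 = 5 * W * W - 5 * t ^ 4 * t by
        linear_combination (-5) * h]
      exact dvd_sub (h1.mul_left _) (h2.mul_left _)
    rcases hp.dvd_or_dvd h36 with h | h
    · rcases hp.dvd_or_dvd (hp.dvd_of_dvd_pow h) with h | h
      · exact not_prime_dvd (Int.isCoprime_two_left.2 hWo) hp h h1
      · exact not_prime_dvd ((hp3.coprime_iff_not_dvd).2 hW3) hp h h1
    · have h := hp.dvd_of_dvd_pow h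
      refine not_prime_dvd huk hp (hp.dvd_of_dvd_pow (n := 2) ?_) h
      rw [show u ^ 2 = W + 3 * (16875 * k) * (16875 * k) by rw [hW]; ring]
      exact dvd_add h1 (h.mul_left _)
  obtain ⟨x, y, hx, hy⟩ := QInt.pow_five_sqrt_five h
    ((Int.isCoprime_two_left.2 hto).mul_left hWt) hW5 (Dvd.dvd.mul_right (by norm_num) _)
  have hxW : x ∣ W := ⟨_, hx⟩
  have hxo : Odd x := by
    rw [hx] at hWo
    exact (Int.odd_mul.1 hWo).1
  have hx3 : ¬ 3 ∣ x := fun h => hW3 (h.trans hxW)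
  have hx5 : ¬ 5 ∣ x := fun h => hW5 (h.trans hxW)
  have hye : Even y := by
    by_contra hyo
    have hyo := Int.not_even_iff_odd.1 hyo
    have : Odd (x ^ 4 + 50 * x ^ 2 * y ^ 2 + 125 * y ^ 4) := by
      rw [hx] at hWo
      exact (Int.odd_mul.1 hWo).2
    revert this
    simp [parity_simps, hxo, Int.not_even_iff_odd.2 hyo, show Even (50 : ℤ) by decide,
      show ¬ Even (125 : ℤ) by decide]
  have hy0 : y ≠ 0 := by
    rintro rfl
    simp [hk] at hy
  have hyx : IsCoprime y x := by
    refine coprime_of_prime hy0 fun p hp h1 h2 => ?_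
    refine not_prime_dvd hWt hp (h2.trans hxW) (hp.dvd_of_dvd_pow (n := 5) ?_)
    rw [← h, hy, sq, sq]
    exact dvd_sub ((h2.trans hxW).mul_left _)
      (((h1.mul_left _).mul_right _).mul_left _ |>.mul_left _)
  obtain ⟨G, hG⟩ : ∃ G, G = x ^ 4 + 10 * x ^ 2 * y ^ 2 + 5 * y ^ 4 := ⟨_, rfl⟩
  rw [← hG] at hy
  have hyG : y * G = 68343750 * k ^ 2 := by linarith
  have hG2 : IsCoprime 2 G := by
    rw [Int.isCoprime_two_left, hG]
    simp [parity_simps, hxo, hye]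
  have hG3 : IsCoprime 3 G := by
    rw [hp3.coprime_iff_not_dvd]
    intro hd
    obtain ⟨m, hm⟩ := not_three_dvd_sq hx3
    rw [show x ^ 4 = (x ^ 2) ^ 2 by ring, hm] at hG
    by_cases hy3 : 3 ∣ y
    · obtain ⟨l, rfl⟩ := hy3
      ring_nf at hG; omega
    · obtain ⟨l, hl⟩ := not_three_dvd_sq hy3
      rw [show y ^ 4 = (y ^ 2) ^ 2 by ring, hl] at hG
      ring_nf at hG; omega
  have hG5 : IsCoprime 5 G := by
    rw [hG, show x ^ 4 + 10 * x ^ 2 * y ^ 2 + 5 * y ^ 4 = x ^ 4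
      + 5 * (2 * x ^ 2 * y ^ 2 + y ^ 4) by ring]
    exact ((hp5.coprime_iff_not_dvd).2 hx5).pow_right.add_mul_left_right _
  have hGy : IsCoprime y G := by
    rw [hG, show x ^ 4 + 10 * x ^ 2 * y ^ 2 + 5 * y ^ 4 = x ^ 4
      + y * (10 * x ^ 2 * y + 5 * y ^ 3) by ring]
    exact hyx.pow_right.add_mul_left_right _
  have hGc : IsCoprime (2 * 3 ^ 7 * 5 ^ 6) G :=
    (hG2.mul_left hG3.pow_left).mul_left hG5.pow_left
  obtain ⟨y', hy'⟩ : (2 * 3 ^ 7 * 5 ^ 6 : ℤ) ∣ y :=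
    hGc.dvd_of_dvd_mul_right ⟨k ^ 2, by rw [hyG]; norm_num⟩
  have hy'G : y' * G = k ^ 2 := by
    rw [hy'] at hyG; linarith
  have hGpos : 0 < G := by rw [hG]; positivity
  have hcop' : IsCoprime y' G := (hy' ▸ hGy).of_mul_left_right
  obtain ⟨b, hb⟩ : ∃ b, G = b ^ 2 := by
    obtain ⟨b, hb | hb⟩ := Int.sq_of_isCoprime hcop'.symm (by rw [mul_comm]; exact hy'G)
    · exact ⟨b, hb⟩
    · nlinarith [sq_nonneg b]
  have hy'pos : 0 < y' := by
    have : 0 < y' * G := by rw [hy'G]; positivity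
    exact pos_of_mul_pos_left this hGpos.le
  obtain ⟨a, ha⟩ : ∃ a, y' = a ^ 2 := by
    obtain ⟨a, ha | ha⟩ := Int.sq_of_isCoprime hcop' hy'G
    · exact ⟨a, ha⟩
    · nlinarith [sq_nonneg a]
  refine no_quartic_solution x y b hy0 (by rw [← hG, hb]) hyx.symm ?_ (Or.inl ?_) ?_
  · exact Dvd.dvd.trans (by norm_num) (Dvd.intro _ hy'.symm)
  · obtain ⟨l, rfl⟩ : 6 ∣ y := Dvd.dvd.trans (by norm_num) (Dvd.intro _ hy'.symm)
    obtain ⟨m, hm⟩ := odd_sq hxo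
    obtain ⟨n, hn⟩ := not_three_dvd_sq hx3
    obtain ⟨i, hi⟩ := not_three_dvd_sq h3u
    have hWx : W = x * (x ^ 2) ^ 2
        + 12 * (x * (150 * x ^ 2 * l ^ 2 + 13500 * l ^ 4)) := by rw [hx]; ring
    have hmod4 : x % 4 = 1 := by
      have e1 : W = x + 4 * (x * (16 * m ^ 2 + 4 * m)
          + 3 * (x * (150 * x ^ 2 * l ^ 2 + 13500 * l ^ 4))) := by rw [hWx, hm]; ring
      have e2 : W % 4 = 1 := by
        generalize 16875 * k = v at *
        rcases Int.even_or_odd u with hu | hu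
        · have hv : Odd v := by
            by_contra hv
            rw [← Int.not_even_iff_odd] at hodd
            exact hodd (by simp [parity_simps, hu, Int.not_odd_iff_even.1 hv])
          obtain ⟨a, rfl⟩ := even_iff_two_dvd.1 hu
          obtain ⟨b, hb⟩ := odd_sq hv
          rw [hb, mul_pow] at hW
          omega
        · have hv : Even v := by
            by_contra hv
            rw [← Int.not_even_iff_odd] at hodd
            have hv := Int.not_even_iff_odd.1 hv
            exact hodd ((hu.pow).add_odd ((by decide : Odd (3 : ℤ)).mul hv.pow))
          obtain ⟨a, rfl⟩ := even_iff_two_dvd.1 hv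
          obtain ⟨b, hb⟩ := odd_sq hu
          rw [hb, mul_pow] at hW
          omega
      omega
    have hmod3 : x % 3 = 1 := by
      have e1 : W = x + 3 * (x * (3 * n ^ 2 + 2 * n)
          + 4 * (x * (150 * x ^ 2 * l ^ 2 + 13500 * l ^ 4))) := by rw [hWx, hn]; ring
      rw [hi] at hW
      omega
    omega
  -- As `6 * 68343750 = 20250 ^ 2`, the product `p * (6 * m) = 6 * y` is a square, and `p` is a square
  -- up to sign.
  · intro p m hpm hc
    have : p * (6 * m) = (20250 * a) ^ 2 := by
      rw [← mul_assoc, mul_right_comm, ← hpm, hy', ha]; ring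
    obtain ⟨r, hr | hr⟩ := Int.sq_of_isCoprime hc this
    · left
      have h6 : IsCoprime r 6 := by
        rw [hr] at hc
        exact (IsCoprime.pow_left_iff (by norm_num)).1 hc.of_mul_right_left
      rw [hr, emod_twelve_of_sq h6]
    · right
      have h6 : IsCoprime r 6 := by
        rw [hr] at hc
        exact (IsCoprime.pow_left_iff (by norm_num)).1
          ((IsCoprime.neg_left_iff _ _).1 hc.of_mul_right_left)
      have := emod_twelve_of_sq h6
      omega

theorem no_rational_points_C2 : ¬ ∃ X Y : ℚ, Y ^ 2 = X ^ 5 - 2187 := by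
  rintro ⟨X, Y, h⟩
  obtain ⟨A, B, e, he, hc, h⟩ := exists_int_solution h
  obtain ⟨u, w, hw, huw, h3u, hodd, h⟩ := exists_uv he hc h
  obtain ⟨k, t, hk, rfl, h5u, h⟩ := exists_WNt he huw (five_dvd_of_uv huw h) h
  rw [← mul_assoc] at huw hodd
  norm_num at huw hodd
  exact no_WNt hk huw h3u h5u hodd h
end
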